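/- arXiv:2102.10899 — 11 statements merged into one kernel-verified Lean document; each statement's English description precedes it below -/
import Mathlib

section
/- For every point P_c = (x_c, y_c) on the caustic E_c, the two points P₁ and P₂ defined by the explicit formulas lie on the billiard ellipse E and on the tangent line to E_c at P_c (the line {(x,y) : x·x_c/a_c² + y·y_c/b_c² = 1}); moreover, every point of E lying on that tangent line equals P₁ or P₂. -/
/-!
In the affine coordinates `X = x / a`, `Y = y / b` the billiard ellipse becomes the unit circle, and
the tangent line to the caustic at `(x_c, y_c)` becomes `U X + V Y = 1` with `U = a x_c / a_c²` and
`V = b y_c / b_c²`. Put `s² = λ (x_c² / a_c⁴ + y_c² / b_c⁴)`. Since `a² = a_c² + λ` and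
`b² = b_c² + λ`, the equation of the caustic says exactly `U² + V² = 1 + s²`. Hence on the
intersection of line and circle `(V X - U Y)² = (U² + V²)(X² + Y²) - (U X + V Y)² = s²`, and the two
values `V X - U Y = ∓ s`, combined with `U X + V Y = 1`, give `P₁` and `P₂`. The circle computation
is carried by `circle_line_mem` and `circle_line_eq`; `point_fst` and `point_snd` rewrite the
explicit formulas, where `ζ = a_c² b_c² s` and `ψ = a_c⁴ b_c⁴ (U² + V²)`.
-/

open Real

/-- The point `((U - s V) / (U² + V²), (V + s U) / (U² + V²))` is on the unit circle and on the line
`U X + V Y = 1`. The sign of `s` is arbitrary, so this covers both intersection points. -/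
lemma circle_line_mem {U V s : ℝ} (h : U ^ 2 + V ^ 2 = 1 + s ^ 2) :
    ((U - s * V) / (U ^ 2 + V ^ 2)) ^ 2 + ((V + s * U) / (U ^ 2 + V ^ 2)) ^ 2 = 1 ∧
      (U - s * V) / (U ^ 2 + V ^ 2) * U + (V + s * U) / (U ^ 2 + V ^ 2) * V = 1 := by
  have hD : U ^ 2 + V ^ 2 ≠ 0 := by rw [h]; positivity
  constructor
  · rw [div_pow, div_pow, ← add_div, div_eq_one_iff_eq (pow_ne_zero 2 hD)]
    linear_combination -(U ^ 2 + V ^ 2) * h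
  · field_simp
    ring

lemma circle_line_eq {U V s X Y : ℝ} (h : U ^ 2 + V ^ 2 = 1 + s ^ 2)
    (hc : X ^ 2 + Y ^ 2 = 1) (hl : X * U + Y * V = 1) :
    (X = (U - s * V) / (U ^ 2 + V ^ 2) ∧ Y = (V + s * U) / (U ^ 2 + V ^ 2)) ∨
      (X = (U - -s * V) / (U ^ 2 + V ^ 2) ∧ Y = (V + -s * U) / (U ^ 2 + V ^ 2)) := by
  have hD : U ^ 2 + V ^ 2 ≠ 0 := by rw [h]; positivity
  have hsq : (V * X - U * Y) ^ 2 = s ^ 2 := by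
    linear_combination h + (U ^ 2 + V ^ 2) * hc - (X * U + Y * V + 1) * hl
  rcases sq_eq_sq_iff_eq_or_eq_neg.mp hsq with hs | hs
  · right
    constructor <;> rw [eq_div_iff hD]
    · linear_combination U * hl + V * hs
    · linear_combination V * hl - U * hs
  · left
    constructor <;> rw [eq_div_iff hD]
    · linear_combination U * hl + V * hs
    · linear_combination V * hl - U * hs

/-- First coordinate of `P₁` (and of `P₂`, for `-s`) in terms of `U`, `V` and `s = ζ / (a_c² b_c²)`.
-/
lemma point_fst {a b ac bc x y s : ℝ} (hac : ac ≠ 0) (hbc : bc ≠ 0)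
    (hD : (a * x / ac ^ 2) ^ 2 + (b * y / bc ^ 2) ^ 2 ≠ 0) :
    (a ^ 2 * bc ^ 4 * x ^ 2 + b ^ 2 * ac ^ 4 * y ^ 2)⁻¹ *
        (ac ^ 2 * a * (a * bc ^ 4 * x - ac ^ 2 * bc ^ 2 * s * b * y)) =
      a * ((a * x / ac ^ 2 - s * (b * y / bc ^ 2)) /
        ((a * x / ac ^ 2) ^ 2 + (b * y / bc ^ 2) ^ 2)) := by
  have hpsi : a ^ 2 * bc ^ 4 * x ^ 2 + b ^ 2 * ac ^ 4 * y ^ 2 =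
      ac ^ 4 * bc ^ 4 * ((a * x / ac ^ 2) ^ 2 + (b * y / bc ^ 2) ^ 2) := by
    field_simp
  rw [hpsi]
  -- Fresh names for the quotients keep `field_simp` from expanding the denominator.
  obtain ⟨U, hU⟩ : ∃ U, U = a * x / ac ^ 2 := ⟨_, rfl⟩
  obtain ⟨V, hV⟩ : ∃ V, V = b * y / bc ^ 2 := ⟨_, rfl⟩
  rw [← hU, ← hV] at hD ⊢
  have hx : a * x = U * ac ^ 2 := by rw [hU]; field_simp
  have hy : b * y = V * bc ^ 2 := by rw [hV]; field_simp
  have hn : ac ^ 2 * a * (a * bc ^ 4 * x - ac ^ 2 * bc ^ 2 * s * b * y) =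
      ac ^ 4 * bc ^ 4 * (a * (U - s * V)) := by
    linear_combination ac ^ 2 * a * bc ^ 4 * hx - ac ^ 4 * a * bc ^ 2 * s * hy
  rw [hn]
  field_simp

/-- Second coordinate; it follows from `point_fst` by exchanging the two axes, which reverses the
sign of `s`. -/
lemma point_snd {a b ac bc x y s : ℝ} (hac : ac ≠ 0) (hbc : bc ≠ 0)
    (hD : (a * x / ac ^ 2) ^ 2 + (b * y / bc ^ 2) ^ 2 ≠ 0) :
    (a ^ 2 * bc ^ 4 * x ^ 2 + b ^ 2 * ac ^ 4 * y ^ 2)⁻¹ *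
        (bc ^ 2 * b * (b * ac ^ 4 * y + ac ^ 2 * bc ^ 2 * s * a * x)) =
      b * ((b * y / bc ^ 2 + s * (a * x / ac ^ 2)) /
        ((a * x / ac ^ 2) ^ 2 + (b * y / bc ^ 2) ^ 2)) := by
  have h := point_fst (a := b) (b := a) (x := y) (y := x) (s := -s) hbc hac (by rwa [add_comm])
  rw [add_comm (a ^ 2 * _ * _), add_comm ((a * x / ac ^ 2) ^ 2)]
  convert h using 2 <;> ring

/-- For every point `P_c = (x_c, y_c)` on the caustic `E_c`, the two
points `P₁` and `P₂` defined by the explicit formulas lie on the billiard ellipse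
`E` and on the tangent line to `E_c` at `P_c`; moreover every point of `E` lying
on that tangent line equals `P₁` or `P₂`. -/
theorem stmt0 (a b lam : ℝ) (hab : b < a) (hb : 0 < b)
    (hlam0 : 0 < lam) (hlamb : lam < b ^ 2)
    (ac bc : ℝ) (hac : ac = Real.sqrt (a ^ 2 - lam)) (hbc : bc = Real.sqrt (b ^ 2 - lam))
    (E Ec : Set (ℝ × ℝ))
    (hE : E = {p : ℝ × ℝ | p.1 ^ 2 / a ^ 2 + p.2 ^ 2 / b ^ 2 = 1})
    (hEc : Ec = {p : ℝ × ℝ | p.1 ^ 2 / ac ^ 2 + p.2 ^ 2 / bc ^ 2 = 1})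
    (xc yc : ℝ) (hPc : (xc, yc) ∈ Ec)
    (zeta psi : ℝ)
    (hzeta : zeta = Real.sqrt lam * Real.sqrt (bc ^ 4 * xc ^ 2 + ac ^ 4 * yc ^ 2))
    (hpsi : psi = a ^ 2 * bc ^ 4 * xc ^ 2 + b ^ 2 * ac ^ 4 * yc ^ 2)
    (P1 P2 : ℝ × ℝ)
    (hP1 : P1 = (psi⁻¹ * (ac ^ 2 * a * (a * bc ^ 4 * xc - zeta * b * yc)),
                 psi⁻¹ * (bc ^ 2 * b * (b * ac ^ 4 * yc + zeta * a * xc))))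
    (hP2 : P2 = (psi⁻¹ * (ac ^ 2 * a * (a * bc ^ 4 * xc + zeta * b * yc)),
                 psi⁻¹ * (bc ^ 2 * b * (b * ac ^ 4 * yc - zeta * a * xc))))
    (T : Set (ℝ × ℝ))
    (hT : T = {p : ℝ × ℝ | p.1 * xc / ac ^ 2 + p.2 * yc / bc ^ 2 = 1}) :
    P1 ∈ E ∧ P1 ∈ T ∧ P2 ∈ E ∧ P2 ∈ T ∧ ∀ p ∈ E ∩ T, p = P1 ∨ p = P2 := by
  have ha : 0 < a := hb.trans hab
  have hA : 0 < a ^ 2 - lam := by nlinarith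
  have hB : 0 < b ^ 2 - lam := by linarith
  have hac2 : ac ^ 2 = a ^ 2 - lam := by rw [hac, Real.sq_sqrt hA.le]
  have hbc2 : bc ^ 2 = b ^ 2 - lam := by rw [hbc, Real.sq_sqrt hB.le]
  have hac0 : ac ≠ 0 := by rw [hac]; exact (Real.sqrt_pos.mpr hA).ne'
  have hbc0 : bc ≠ 0 := by rw [hbc]; exact (Real.sqrt_pos.mpr hB).ne'
  have hC : xc ^ 2 / ac ^ 2 + yc ^ 2 / bc ^ 2 = 1 := by simpa [hEc] using hPc
  obtain ⟨s, hs⟩ : ∃ s, s = zeta / (ac ^ 2 * bc ^ 2) := ⟨_, rfl⟩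
  have hz : zeta = ac ^ 2 * bc ^ 2 * s := by rw [hs]; field_simp
  have hz2 : zeta ^ 2 = lam * (bc ^ 4 * xc ^ 2 + ac ^ 4 * yc ^ 2) := by
    rw [hzeta, mul_pow, Real.sq_sqrt hlam0.le, Real.sq_sqrt (by positivity)]
  have hs2 : s ^ 2 = lam * ((xc / ac ^ 2) ^ 2 + (yc / bc ^ 2) ^ 2) := by
    rw [hs, div_pow, hz2]
    field_simp
  -- The caustic equation, using `a² = a_c² + λ` and `b² = b_c² + λ`.
  have hUV : (a * xc / ac ^ 2) ^ 2 + (b * yc / bc ^ 2) ^ 2 = 1 + s ^ 2 := by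
    have h1 : xc ^ 2 / ac ^ 2 = ac ^ 2 * (xc / ac ^ 2) ^ 2 := by field_simp
    have h2 : yc ^ 2 / bc ^ 2 = bc ^ 2 * (yc / bc ^ 2) ^ 2 := by field_simp
    rw [h1, h2] at hC
    rw [hs2, mul_div_assoc, mul_div_assoc]
    linear_combination hC - (xc / ac ^ 2) ^ 2 * hac2 - (yc / bc ^ 2) ^ 2 * hbc2
  have hUV' : (a * xc / ac ^ 2) ^ 2 + (b * yc / bc ^ 2) ^ 2 = 1 + (-s) ^ 2 := by
    rw [hUV, neg_sq]
  have hD : (a * xc / ac ^ 2) ^ 2 + (b * yc / bc ^ 2) ^ 2 ≠ 0 := by rw [hUV]; positivity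
  have hP1' := hP1
  have hP2' := hP2
  rw [hpsi, hz, point_fst hac0 hbc0 hD, point_snd hac0 hbc0 hD] at hP1'
  -- `P₂` is `P₁` with `s` replaced by `-s`.
  have e1 : a * bc ^ 4 * xc + ac ^ 2 * bc ^ 2 * s * b * yc =
      a * bc ^ 4 * xc - ac ^ 2 * bc ^ 2 * -s * b * yc := by ring
  have e2 : b * ac ^ 4 * yc - ac ^ 2 * bc ^ 2 * s * a * xc =
      b * ac ^ 4 * yc + ac ^ 2 * bc ^ 2 * -s * a * xc := by ring
  rw [hpsi, hz, e1, e2, point_fst hac0 hbc0 hD, point_snd hac0 hbc0 hD] at hP2'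
  -- Membership in `E` and `T` in the coordinates `X = x / a`, `Y = y / b`.
  have memE : ∀ X Y : ℝ, (a * X, b * Y) ∈ E ↔ X ^ 2 + Y ^ 2 = 1 := by
    intro X Y
    have h1 : (a * X) ^ 2 / a ^ 2 = X ^ 2 := by field_simp
    have h2 : (b * Y) ^ 2 / b ^ 2 = Y ^ 2 := by field_simp
    simp only [hE, Set.mem_ofPred_eq, h1, h2]
  have memT : ∀ X Y : ℝ,
      (a * X, b * Y) ∈ T ↔ X * (a * xc / ac ^ 2) + Y * (b * yc / bc ^ 2) = 1 := by
    intro X Y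
    have h1 : a * X * xc / ac ^ 2 = X * (a * xc / ac ^ 2) := by ring
    have h2 : b * Y * yc / bc ^ 2 = Y * (b * yc / bc ^ 2) := by ring
    simp only [hT, Set.mem_ofPred_eq, h1, h2]
  rw [hP1', hP2']
  refine ⟨(memE _ _).2 (circle_line_mem hUV).1, (memT _ _).2 (circle_line_mem hUV).2,
    (memE _ _).2 ?_, (memT _ _).2 ?_, ?_⟩
  · exact (circle_line_mem hUV').1
  · exact (circle_line_mem hUV').2
  · rintro ⟨x, y⟩ ⟨hpE, hpT⟩
    obtain ⟨X, rfl⟩ : ∃ X, x = a * X := ⟨x / a, by field_simp⟩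
    obtain ⟨Y, rfl⟩ : ∃ Y, y = b * Y := ⟨y / b, by field_simp⟩
    rcases circle_line_eq hUV ((memE _ _).1 hpE) ((memT _ _).1 hpT) with ⟨hX, hY⟩ | ⟨hX, hY⟩
    · left; rw [← hX, ← hY]
    · right; rw [← hX, ← hY]
end

section
/- For every point P_c = (x_c, y_c) on the caustic E_c, the distance between the two intersection points P₁ and P₂ of the tangent line to E_c at P_c with the billiard ellipse E equals 2ab·√(a²b_c⁴x_c² + a_c⁴b²y_c² − a_c⁴b_c⁴)·√(a_c⁴y_c² + b_c⁴x_c²) / (a²b_c⁴x_c² + a_c⁴b²y_c²). -/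
/-!
Write `S = b_c⁴ x_c² + a_c⁴ y_c²`, so that `ζ² = λ S`. The difference of the two points is
`P₁ - P₂ = (2 a b ζ / ψ) · (-a_c² y_c, b_c² x_c)`, whose squared length is `4 a² b² ζ² S / ψ²`.
The equation of the caustic, cleared of denominators, together with `a² = a_c² + λ` and
`b² = b_c² + λ`, gives `ψ - a_c⁴ b_c⁴ = λ S`. Hence the right-hand side of the claim is
`2 a b √(λ S) √S / ψ`, a nonnegative number with the same square.
-/

open Real

/-- The distance between the two intersection points `P₁`, `P₂` of
the tangent line to the caustic at `P_c` with the billiard ellipse equals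
`2ab·√(a²b_c⁴x_c² + a_c⁴b²y_c² − a_c⁴b_c⁴)·√(a_c⁴y_c² + b_c⁴x_c²) / (a²b_c⁴x_c² + a_c⁴b²y_c²)`. -/
theorem stmt1 (a b lam : ℝ) (hab : b < a) (hb : 0 < b)
    (hlam0 : 0 < lam) (hlamb : lam < b ^ 2)
    (ac bc : ℝ) (hac : ac = Real.sqrt (a ^ 2 - lam)) (hbc : bc = Real.sqrt (b ^ 2 - lam))
    (Ec : Set (ℝ × ℝ))
    (hEc : Ec = {p : ℝ × ℝ | p.1 ^ 2 / ac ^ 2 + p.2 ^ 2 / bc ^ 2 = 1})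
    (xc yc : ℝ) (hPc : (xc, yc) ∈ Ec)
    (zeta psi : ℝ)
    (hzeta : zeta = Real.sqrt lam * Real.sqrt (bc ^ 4 * xc ^ 2 + ac ^ 4 * yc ^ 2))
    (hpsi : psi = a ^ 2 * bc ^ 4 * xc ^ 2 + b ^ 2 * ac ^ 4 * yc ^ 2)
    (P1 P2 : ℝ × ℝ)
    (hP1 : P1 = (psi⁻¹ * (ac ^ 2 * a * (a * bc ^ 4 * xc - zeta * b * yc)),
                 psi⁻¹ * (bc ^ 2 * b * (b * ac ^ 4 * yc + zeta * a * xc))))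
    (hP2 : P2 = (psi⁻¹ * (ac ^ 2 * a * (a * bc ^ 4 * xc + zeta * b * yc)),
                 psi⁻¹ * (bc ^ 2 * b * (b * ac ^ 4 * yc - zeta * a * xc)))) :
    Real.sqrt ((P1.1 - P2.1) ^ 2 + (P1.2 - P2.2) ^ 2) =
      2 * a * b * Real.sqrt (a ^ 2 * bc ^ 4 * xc ^ 2 + ac ^ 4 * b ^ 2 * yc ^ 2 - ac ^ 4 * bc ^ 4) *
        Real.sqrt (ac ^ 4 * yc ^ 2 + bc ^ 4 * xc ^ 2) /
        (a ^ 2 * bc ^ 4 * xc ^ 2 + ac ^ 4 * b ^ 2 * yc ^ 2) := by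
  have ha : 0 < a := hb.trans hab
  have hba : b ^ 2 < a ^ 2 := by nlinarith
  have hac2 : ac ^ 2 = a ^ 2 - lam := by rw [hac, sq_sqrt (by linarith)]
  have hbc2 : bc ^ 2 = b ^ 2 - lam := by rw [hbc, sq_sqrt (by linarith)]
  have hac0 : ac ≠ 0 := by rw [← sq_pos_iff, hac2]; linarith
  have hbc0 : bc ≠ 0 := by rw [← sq_pos_iff, hbc2]; linarith
  have hcaustic : bc ^ 2 * xc ^ 2 + ac ^ 2 * yc ^ 2 = ac ^ 2 * bc ^ 2 := by
    rw [hEc, Set.mem_ofPred_eq] at hPc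
    field_simp at hPc
    linarith
  have hS : 0 ≤ ac ^ 4 * yc ^ 2 + bc ^ 4 * xc ^ 2 := by positivity
  have hz2 : zeta ^ 2 = lam * (ac ^ 4 * yc ^ 2 + bc ^ 4 * xc ^ 2) := by
    rw [hzeta, mul_pow, sq_sqrt hlam0.le, sq_sqrt (by positivity)]
    ring
  have hrad : a ^ 2 * bc ^ 4 * xc ^ 2 + ac ^ 4 * b ^ 2 * yc ^ 2 - ac ^ 4 * bc ^ 4
      = lam * (ac ^ 4 * yc ^ 2 + bc ^ 4 * xc ^ 2) := by
    linear_combination (ac ^ 2 * bc ^ 2) * hcaustic - bc ^ 4 * xc ^ 2 * hac2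
      - ac ^ 4 * yc ^ 2 * hbc2
  have hpsi' : a ^ 2 * bc ^ 4 * xc ^ 2 + ac ^ 4 * b ^ 2 * yc ^ 2 = psi := by rw [hpsi]; ring
  have hpsi0 : 0 ≤ psi := by rw [hpsi]; positivity
  rw [hrad, hpsi', Real.sqrt_eq_iff_mul_self_eq (by positivity) (by positivity), ← sq,
    div_pow, mul_pow, mul_pow, sq_sqrt (by positivity), sq_sqrt hS, ← hz2, hP1, hP2]
  ring
end

section
/- For every real u, if P_c = (a_c cos u, b_c sin u) on the caustic E_c, then the distance between the two points P₁ and P₂ where the tangent line to E_c at P_c meets the billiard ellipse E equals 2ab√λ·((a² − λ) − c²cos²u) / (b²(a² − λ) − λc²cos²u). -/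
/-!
Write `A = ac²`, `B = bc²`, `D = B cos² u + A sin² u` and `N = a² B cos² u + b² A sin² u`. The radicand
`bc⁴ xc² + ac⁴ yc²` factors as `A B D`, so `ζ² = λ A B D`, and `ψ = A B N`. The chord `P₁ - P₂` is
`2 a b ζ / ψ` times the vector `(-A yc, B xc)`, whose squared length is again `A B D`; hence the squared
length of the chord is `(2 a b √λ D / N)²`. Since `D, N > 0`, taking roots gives `2 a b √λ D / N`, and
`sin² u = 1 - cos² u` together with `A - B = c²` turns `D` and `N` into the expressions of the claim.
-/

open Real

/-- With `P_c = (a_c cos u, b_c sin u)` on the caustic, the distance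
between the two points where the tangent line to the caustic at `P_c` meets the
billiard ellipse equals `2ab√λ·((a² − λ) − c²cos²u) / (b²(a² − λ) − λc²cos²u)`. -/
theorem stmt2 (a b lam : ℝ) (hab : b < a) (hb : 0 < b)
    (hlam0 : 0 < lam) (hlamb : lam < b ^ 2)
    (c ac bc : ℝ) (hc : c = Real.sqrt (a ^ 2 - b ^ 2))
    (hac : ac = Real.sqrt (a ^ 2 - lam)) (hbc : bc = Real.sqrt (b ^ 2 - lam))
    (u : ℝ) (xc yc : ℝ) (hxc : xc = ac * Real.cos u) (hyc : yc = bc * Real.sin u)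
    (zeta psi : ℝ)
    (hzeta : zeta = Real.sqrt lam * Real.sqrt (bc ^ 4 * xc ^ 2 + ac ^ 4 * yc ^ 2))
    (hpsi : psi = a ^ 2 * bc ^ 4 * xc ^ 2 + b ^ 2 * ac ^ 4 * yc ^ 2)
    (P1 P2 : ℝ × ℝ)
    (hP1 : P1 = (psi⁻¹ * (ac ^ 2 * a * (a * bc ^ 4 * xc - zeta * b * yc)),
                 psi⁻¹ * (bc ^ 2 * b * (b * ac ^ 4 * yc + zeta * a * xc))))
    (hP2 : P2 = (psi⁻¹ * (ac ^ 2 * a * (a * bc ^ 4 * xc + zeta * b * yc)),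
                 psi⁻¹ * (bc ^ 2 * b * (b * ac ^ 4 * yc - zeta * a * xc)))) :
    Real.sqrt ((P1.1 - P2.1) ^ 2 + (P1.2 - P2.2) ^ 2) =
      2 * a * b * Real.sqrt lam * ((a ^ 2 - lam) - c ^ 2 * Real.cos u ^ 2) /
        (b ^ 2 * (a ^ 2 - lam) - lam * c ^ 2 * Real.cos u ^ 2) := by
  have hA : 0 < a ^ 2 - lam := by nlinarith
  have hB : 0 < b ^ 2 - lam := by linarith
  have hc2 : c ^ 2 = a ^ 2 - b ^ 2 := by rw [hc, Real.sq_sqrt (by nlinarith)]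
  have hac2 : ac ^ 2 = a ^ 2 - lam := by rw [hac, Real.sq_sqrt hA.le]
  have hbc2 : bc ^ 2 = b ^ 2 - lam := by rw [hbc, Real.sq_sqrt hB.le]
  have ha : 0 < a := hb.trans hab
  have hsc : Real.sin u ^ 2 = 1 - Real.cos u ^ 2 := Real.sin_sq u
  have hC0 : 0 ≤ Real.cos u ^ 2 := sq_nonneg _
  have hC1 : Real.cos u ^ 2 ≤ 1 := Real.cos_sq_le_one u
  set A := a ^ 2 - lam with hAdef
  set B := b ^ 2 - lam with hBdef
  set D := A - c ^ 2 * Real.cos u ^ 2 with hD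
  set N := b ^ 2 * A - lam * c ^ 2 * Real.cos u ^ 2 with hN
  have hBA : c ^ 2 = A - B := by rw [hc2, hAdef, hBdef]; ring
  have hDpos : 0 < D := by
    rw [hD, hBA]; nlinarith
  have hNpos : 0 < N := by
    have h : N = lam * D + B * A := by rw [hN, hD, hBdef]; ring
    rw [h]; positivity
  have hx2 : xc ^ 2 = A * Real.cos u ^ 2 := by rw [hxc, mul_pow, hac2]
  have hy2 : yc ^ 2 = B * (1 - Real.cos u ^ 2) := by rw [hyc, mul_pow, hbc2, hsc]
  have hac4 : ac ^ 4 = A ^ 2 := by rw [← hac2]; ring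
  have hbc4 : bc ^ 4 = B ^ 2 := by rw [← hbc2]; ring
  have hQ : bc ^ 4 * xc ^ 2 + ac ^ 4 * yc ^ 2 = A * B * D := by
    rw [hbc4, hac4, hx2, hy2, hD, hBA]; ring
  have hz2 : zeta ^ 2 = lam * (A * B * D) := by
    rw [hzeta, hQ, mul_pow, Real.sq_sqrt hlam0.le, Real.sq_sqrt (by positivity)]
  have hpsi' : psi = A * B * N := by
    rw [hpsi, mul_assoc (a ^ 2), mul_assoc (b ^ 2), hbc4, hac4, hx2, hy2, hN, hc2, hAdef, hBdef]
    ring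
  have hsq : (P1.1 - P2.1) ^ 2 + (P1.2 - P2.2) ^ 2
      = (2 * a * b * Real.sqrt lam * D / N) ^ 2 := by
    have h1 : (P1.1 - P2.1) ^ 2 + (P1.2 - P2.2) ^ 2
        = psi⁻¹ ^ 2 * (4 * a ^ 2 * b ^ 2 * zeta ^ 2 * (bc ^ 4 * xc ^ 2 + ac ^ 4 * yc ^ 2)) := by
      rw [hP1, hP2]; ring
    rw [h1, hz2, hQ, hpsi', div_pow, mul_pow _ D, mul_pow _ (Real.sqrt lam),
      Real.sq_sqrt hlam0.le]
    clear_value A B D N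
    field_simp
    ring
  rw [hsq, Real.sqrt_sq (by positivity)]
end

section
/- Let P ≠ Q be two points of the billiard ellipse E and let v = (Q − P)/‖Q − P‖ be the unit vector of the chord PQ. Then the line through P and Q is tangent to the caustic E_c if and only if ⟨A·P, v⟩² = λ/(a²b²); moreover, in that case also ⟨A·Q, v⟩² = λ/(a²b²), so the absolute value of Joachimsthal's quantity at both endpoints equals J = √λ/(ab). -/
/-!
Write `P = (x, y)`, `w = Q − P = (u, s)` and `D = x s − y u`. Substituting `P + t w` into the equation
of the caustic gives a quadratic in `t` with positive leading coefficient, so the line meets the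
caustic exactly once iff the discriminant vanishes, that is, iff
`(a² − λ) s² + (b² − λ) u² = D²` (`quadratic_unique_root_iff`, `caustic_discrim`).
As `P` lies on `E`, Lagrange's identity for the form `x²/a² + y²/b²` gives
`a² b² ⟨A P, w⟩² = a² s² + b² u² − D²` (`joachimsthal_sq`). Subtracting, the tangency condition becomes
`a² b² ⟨A P, w⟩² = λ ‖w‖²`. Since `Q` lies on `E` as well, `⟨A Q, w⟩ = −⟨A P, w⟩`.
-/

open Real

/-- The Euclidean inner product on `ℝ × ℝ`. -/
def dot2 (p q : ℝ × ℝ) : ℝ := p.1 * q.1 + p.2 * q.2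

/-- The Euclidean norm on `ℝ × ℝ`. -/
noncomputable def enorm2 (p : ℝ × ℝ) : ℝ := Real.sqrt (p.1 ^ 2 + p.2 ^ 2)

/-- A real quadratic with nonzero leading coefficient has exactly one root iff its
(reduced) discriminant vanishes. -/
lemma quadratic_unique_root_iff {M N R : ℝ} (hM : M ≠ 0) :
    (∃! t : ℝ, M * t ^ 2 + 2 * N * t + R = 0) ↔ N ^ 2 = M * R := by
  constructor
  · rintro ⟨t, ht, huniq⟩
    -- The reflection of a root about the axis `-N / M` is again a root, so it equals `t`.
    have h1 : -(2 * N) / M - t = t := by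
      apply huniq
      have : M * (-(2 * N) / M - t) ^ 2 + 2 * N * (-(2 * N) / M - t) + R
          = M * t ^ 2 + 2 * N * t + R := by
        field_simp
        ring
      exact this.trans ht
    have h2 : N = -(M * t) := by
      field_simp at h1
      linarith
    subst h2
    linear_combination -M * ht
  · intro h
    have key (t : ℝ) : M * (M * t ^ 2 + 2 * N * t + R) = (M * t + N) ^ 2 := by
      linear_combination -h
    refine ⟨-N / M, ?_, fun t ht => ?_⟩
    · apply (mul_eq_zero.mp ?_).resolve_left hM
      rw [key]
      field_simp
      ring
    · have h0 : (M * t + N) ^ 2 = 0 := by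
        rw [← key]
        simp only at ht
        rw [ht, mul_zero]
      rw [eq_div_iff hM]
      linarith [pow_eq_zero_iff (two_ne_zero) |>.mp h0]

/-- The discriminant of the caustic's equation `B x² + A y² = A B` along the line
`(x, y) + t (u, s)` vanishes iff `A s² + B u²` is the square of the cross product of
`(x, y)` and `(u, s)`. -/
lemma caustic_discrim {A B : ℝ} (hA : A ≠ 0) (hB : B ≠ 0) (x y u s : ℝ) :
    (B * x * u + A * y * s) ^ 2 = (B * u ^ 2 + A * s ^ 2) * (B * x ^ 2 + A * y ^ 2 - A * B) ↔
      A * s ^ 2 + B * u ^ 2 = (x * s - y * u) ^ 2 := by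
  have key : (B * x * u + A * y * s) ^ 2 -
      (B * u ^ 2 + A * s ^ 2) * (B * x ^ 2 + A * y ^ 2 - A * B) =
      A * B * (A * s ^ 2 + B * u ^ 2 - (x * s - y * u) ^ 2) := by ring
  rw [← sub_eq_zero, key, mul_eq_zero, or_iff_right (mul_ne_zero hA hB), sub_eq_zero]

/-- Lagrange's identity for the quadratic form of the billiard ellipse at a point of the ellipse. -/
lemma joachimsthal_sq {a b x y : ℝ} (ha : a ≠ 0) (hb : b ≠ 0)
    (h : x ^ 2 / a ^ 2 + y ^ 2 / b ^ 2 = 1) (u s : ℝ) :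
    a ^ 2 * b ^ 2 * (x / a ^ 2 * u + y / b ^ 2 * s) ^ 2 =
      a ^ 2 * s ^ 2 + b ^ 2 * u ^ 2 - (x * s - y * u) ^ 2 := by
  have h2 : a ^ 2 * s ^ 2 + b ^ 2 * u ^ 2 =
      (a ^ 2 * s ^ 2 + b ^ 2 * u ^ 2) * (x ^ 2 / a ^ 2 + y ^ 2 / b ^ 2) := by rw [h, mul_one]
  rw [h2]
  field_simp
  ring

/-- Let `P ≠ Q` be points of the billiard ellipse `E` and
`v = (Q − P)/‖Q − P‖`.  The line through `P` and `Q` is tangent to the caustic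
`E_c` iff `⟨A·P, v⟩² = λ/(a²b²)`; moreover, in that case also
`⟨A·Q, v⟩² = λ/(a²b²)`, so `|⟨A·P, v⟩| = |⟨A·Q, v⟩| = J = √λ/(ab)`. -/
theorem stmt3 (a b lam : ℝ) (hab : b < a) (hb : 0 < b)
    (hlam0 : 0 < lam) (hlamb : lam < b ^ 2)
    (ac bc : ℝ) (hac : ac = Real.sqrt (a ^ 2 - lam)) (hbc : bc = Real.sqrt (b ^ 2 - lam))
    (E Ec : Set (ℝ × ℝ))
    (hE : E = {p : ℝ × ℝ | p.1 ^ 2 / a ^ 2 + p.2 ^ 2 / b ^ 2 = 1})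
    (hEc : Ec = {p : ℝ × ℝ | p.1 ^ 2 / ac ^ 2 + p.2 ^ 2 / bc ^ 2 = 1})
    (A : ℝ × ℝ → ℝ × ℝ) (hA : A = fun p : ℝ × ℝ => (p.1 / a ^ 2, p.2 / b ^ 2))
    (J : ℝ) (hJ : J = Real.sqrt lam / (a * b))
    (P Q : ℝ × ℝ) (hP : P ∈ E) (hQ : Q ∈ E) (hPQ : P ≠ Q)
    (v : ℝ × ℝ) (hv : v = (enorm2 (Q - P))⁻¹ • (Q - P))
    (L : Set (ℝ × ℝ)) (hL : L = {p : ℝ × ℝ | ∃ t : ℝ, p = P + t • (Q - P)}) :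
    ((∃ p, L ∩ Ec = {p}) ↔ dot2 (A P) v ^ 2 = lam / (a ^ 2 * b ^ 2)) ∧
      ((∃ p, L ∩ Ec = {p}) →
        dot2 (A Q) v ^ 2 = lam / (a ^ 2 * b ^ 2) ∧
          |dot2 (A P) v| = J ∧ |dot2 (A Q) v| = J) := by
  have ha : 0 < a := hb.trans hab
  have hA0 : 0 < a ^ 2 - lam := by nlinarith
  have hB0 : 0 < b ^ 2 - lam := by linarith
  have hac2 : ac ^ 2 = a ^ 2 - lam := by rw [hac, Real.sq_sqrt hA0.le]
  have hbc2 : bc ^ 2 = b ^ 2 - lam := by rw [hbc, Real.sq_sqrt hB0.le]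
  obtain ⟨x, y⟩ := P
  obtain ⟨x', y'⟩ := Q
  obtain ⟨u, rfl⟩ : ∃ u, x' = x + u := ⟨x' - x, by ring⟩
  obtain ⟨s, rfl⟩ : ∃ s, y' = y + s := ⟨y' - y, by ring⟩
  have hw : ((x + u, y + s) : ℝ × ℝ) - (x, y) = (u, s) := by ext <;> simp
  rw [hw] at hv hL
  have hus : u ≠ 0 ∨ s ≠ 0 := by
    by_contra! h
    exact hPQ (by simp [h.1, h.2])
  have hn : 0 < u ^ 2 + s ^ 2 := by
    rcases hus with h | h <;> positivity
  have hM : 0 < (b ^ 2 - lam) * u ^ 2 + (a ^ 2 - lam) * s ^ 2 := by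
    rcases hus with h | h <;> positivity
  rw [hE, Set.mem_ofPred_eq] at hP hQ
  have hne : enorm2 (u, s) ^ 2 = u ^ 2 + s ^ 2 := Real.sq_sqrt hn.le
  have hdotv (p : ℝ × ℝ) : dot2 (A p) v ^ 2 =
      (p.1 / a ^ 2 * u + p.2 / b ^ 2 * s) ^ 2 / (u ^ 2 + s ^ 2) := by
    rw [← hne, hv, hA]
    simp only [dot2, Prod.smul_mk, smul_eq_mul]
    ring
  have hmem (t : ℝ) : ((x, y) + t • (u, s) : ℝ × ℝ) ∈ Ec ↔
      ((b ^ 2 - lam) * u ^ 2 + (a ^ 2 - lam) * s ^ 2) * t ^ 2 +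
        2 * ((b ^ 2 - lam) * x * u + (a ^ 2 - lam) * y * s) * t +
        ((b ^ 2 - lam) * x ^ 2 + (a ^ 2 - lam) * y ^ 2 - (a ^ 2 - lam) * (b ^ 2 - lam)) = 0 := by
    rw [hEc, Set.mem_ofPred_eq, hac2, hbc2, div_add_div _ _ hA0.ne' hB0.ne',
      div_eq_one_iff_eq (mul_pos hA0 hB0).ne', ← sub_eq_zero]
    simp only [Prod.smul_mk, smul_eq_mul, Prod.mk_add_mk]
    ring_nf
  have hinj : Function.Injective fun t : ℝ => ((x, y) + t • (u, s) : ℝ × ℝ) := by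
    intro t t' h
    simp only [Prod.smul_mk, smul_eq_mul, Prod.mk_add_mk, Prod.mk.injEq, add_right_inj] at h
    rcases hus with hu | hs
    · exact mul_right_cancel₀ hu h.1
    · exact mul_right_cancel₀ hs h.2
  have hunique : (∃ p, L ∩ Ec = {p}) ↔ ∃! t : ℝ, ((x, y) + t • (u, s) : ℝ × ℝ) ∈ Ec := by
    rw [hL]
    constructor
    · rintro ⟨p, hp⟩
      obtain ⟨⟨t, rfl⟩, ht⟩ : p ∈ {p : ℝ × ℝ | ∃ t : ℝ, p = (x, y) + t • (u, s)} ∩ Ec :=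
        hp ▸ Set.mem_singleton p
      refine ⟨t, ht, fun t' ht' => hinj ?_⟩
      exact hp.subset ⟨⟨t', rfl⟩, ht'⟩
    · rintro ⟨t, ht, huniq⟩
      refine ⟨(x, y) + t • (u, s), Set.eq_singleton_iff_unique_mem.mpr ⟨⟨⟨t, rfl⟩, ht⟩, ?_⟩⟩
      rintro _ ⟨⟨t', rfl⟩, ht'⟩
      rw [huniq t' ht']
  have hiff : (∃ p, L ∩ Ec = {p}) ↔ dot2 (A (x, y)) v ^ 2 = lam / (a ^ 2 * b ^ 2) := by
    rw [hunique]
    simp only [hmem]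
    rw [quadratic_unique_root_iff hM.ne', caustic_discrim hA0.ne' hB0.ne', hdotv,
      div_eq_div_iff hn.ne' (by positivity)]
    have hJo := joachimsthal_sq ha.ne' hb.ne' hP u s
    constructor <;> intro h
    · linear_combination hJo + h
    · linear_combination h - hJo
  have hPQ_sq : dot2 (A (x + u, y + s)) v ^ 2 = dot2 (A (x, y)) v ^ 2 := by
    -- Subtracting the equations of the ellipse at `P` and `Q` gives `⟨A (P + Q), Q - P⟩ = 0`.
    have hneg : (x + u) / a ^ 2 * u + (y + s) / b ^ 2 * s
        = -(x / a ^ 2 * u + y / b ^ 2 * s) := by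
      simp only at hP hQ
      linear_combination hQ - hP
    rw [hdotv, hdotv]
    simp only
    rw [hneg, neg_sq]
  have habs {r : ℝ} (h : r ^ 2 = lam / (a ^ 2 * b ^ 2)) : |r| = J := by
    rw [← Real.sqrt_sq_eq_abs, h, hJ, ← mul_pow, Real.sqrt_div hlam0.le,
      Real.sqrt_sq (by positivity)]
  refine ⟨hiff, fun h => ?_⟩
  have h1 := hiff.mp h
  exact ⟨hPQ_sq.trans h1, habs h1, habs (hPQ_sq.trans h1)⟩
end

section
/- For the parametrization γ(t) = (a cos t, b sin t) of the ellipse E, the curvature κ(t) = (x'(t)y''(t) − y'(t)x''(t))/(x'(t)² + y'(t)²)^{3/2} satisfies κ(t)^{2/3} = (ab)^{2/3} / (‖γ(t) − F₁‖·‖γ(t) − F₂‖) for every t. -/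
/-!
Both sides equal `(a b)^{2/3} / N` with `N = a² sin² t + b² cos² t`, the squared speed.
The numerator of the curvature is the constant `a b`, so `κ = a b / N^{3/2}`. The focal distances
are `a - c cos t` and `a + c cos t`, with product `a² - c² cos² t = N` because `c² = a² - b²`.
-/

open Real

/-- The (signed) curvature of a plane curve `t ↦ (x t, y t)`:
`κ = (x'y'' − y'x'')/(x'² + y'²)^{3/2}`. -/
noncomputable def curv (x y : ℝ → ℝ) (t : ℝ) : ℝ :=
  (deriv x t * deriv (deriv y) t - deriv y t * deriv (deriv x) t) /
    (deriv x t ^ 2 + deriv y t ^ 2) ^ ((3 : ℝ) / 2)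

/-- The distance from a point of the ellipse to the focus `(d, 0)`; both foci are covered,
since `d` is only constrained by its square. -/
lemma focal_dist {a b d : ℝ} (ha : 0 < a) (hd : d ^ 2 = a ^ 2 - b ^ 2) (t : ℝ) :
    Real.sqrt ((a * Real.cos t - d) ^ 2 + (b * Real.sin t - 0) ^ 2) = a - d * Real.cos t := by
  have h : (a * Real.cos t - d) ^ 2 + (b * Real.sin t - 0) ^ 2 = (a - d * Real.cos t) ^ 2 := by
    linear_combination (b ^ 2) * Real.sin_sq_add_cos_sq t + (1 - Real.cos t ^ 2) * hd
  have hda : |d| ≤ a := abs_le_of_sq_le_sq (by nlinarith [sq_nonneg b]) ha.le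
  have h1 : d * Real.cos t ≤ a := calc
    d * Real.cos t ≤ |d * Real.cos t| := le_abs_self _
    _ = |d| * |Real.cos t| := abs_mul _ _
    _ ≤ |d| * 1 := by gcongr; exact Real.abs_cos_le_one t
    _ ≤ a := by linarith
  rw [h, Real.sqrt_sq (by linarith)]

lemma curv_ellipse (a b t : ℝ) :
    curv (fun s => a * Real.cos s) (fun s => b * Real.sin s) t =
      a * b / (a ^ 2 * Real.sin t ^ 2 + b ^ 2 * Real.cos t ^ 2) ^ ((3 : ℝ) / 2) := by
  have hx : deriv (fun s => a * Real.cos s) = fun s => -a * Real.sin s := by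
    funext s
    simp
  have hy : deriv (fun s => b * Real.sin s) = fun s => b * Real.cos s := by
    funext s
    simp
  have hxx : deriv (fun s => -a * Real.sin s) t = -a * Real.cos t := by simp
  have hyy : deriv (fun s => b * Real.cos s) t = -b * Real.sin t := by simp
  rw [curv, hx, hy, hxx, hyy]
  congr 1
  · linear_combination a * b * Real.sin_sq_add_cos_sq t
  · congr 1
    ring

/-- For the parametrization `γ(t) = (a cos t, b sin t)` of the
ellipse `E`, the curvature satisfies
`κ(t)^{2/3} = (ab)^{2/3}/(‖γ(t) − F₁‖·‖γ(t) − F₂‖)` for every `t`. -/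
theorem stmt6 (a b : ℝ) (hab : b < a) (hb : 0 < b)
    (c : ℝ) (hc : c = Real.sqrt (a ^ 2 - b ^ 2))
    (F1 F2 : ℝ × ℝ) (hF1 : F1 = (c, 0)) (hF2 : F2 = (-c, 0)) (t : ℝ) :
    curv (fun s => a * Real.cos s) (fun s => b * Real.sin s) t ^ ((2 : ℝ) / 3) =
      (a * b) ^ ((2 : ℝ) / 3) /
        (Real.sqrt ((a * Real.cos t - F1.1) ^ 2 + (b * Real.sin t - F1.2) ^ 2) *
          Real.sqrt ((a * Real.cos t - F2.1) ^ 2 + (b * Real.sin t - F2.2) ^ 2)) := by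
  have ha : 0 < a := hb.trans hab
  have hc2 : c ^ 2 = a ^ 2 - b ^ 2 := by
    rw [hc, Real.sq_sqrt (by nlinarith)]
  have hN : 0 < a ^ 2 * Real.sin t ^ 2 + b ^ 2 * Real.cos t ^ 2 := by
    nlinarith [Real.sin_sq_add_cos_sq t, sq_nonneg (Real.sin t), mul_pos hb hb,
      mul_nonneg (sq_nonneg (Real.sin t)) (by nlinarith : 0 ≤ a ^ 2 - b ^ 2)]
  subst hF1 hF2
  rw [curv_ellipse, focal_dist ha hc2, focal_dist ha (by rw [neg_sq, hc2]),
    Real.div_rpow (by positivity) (by positivity), ← Real.rpow_mul hN.le]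
  norm_num
  congr 1
  linear_combination (Real.cos t ^ 2) * hc2 + (a ^ 2) * Real.sin_sq_add_cos_sq t
end

section
/- For the parametrization γ_c(u) = (a_c cos u, b_c sin u) of the caustic ellipse, the total mass of the universal measure is ∫₀^{2π} κ_c(u)^{2/3}·‖γ_c'(u)‖ du = (4 (a_c b_c)^{2/3} / a_c)·K(e_c), where e_c = √(a_c² − b_c²)/a_c is the eccentricity of the caustic and κ_c(u) is the curvature of γ_c. -/
/-! With `D u = a² sin² u + b² cos² u` the curvature of the ellipse is `a b / D ^ (3/2)` and its speed is
`√D`, so the density is `(a b) ^ (2/3) / √D`. Since `D u = a² (1 - k² sin² (π/2 - u))` with `k` the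
eccentricity, this is a constant multiple of the integrand of `ellK k`, reflected at `π/4`. That integrand is
even and `π`-periodic, so a full turn is four quarter turns. -/

open Real MeasureTheory

/-- The complete elliptic integral of the first kind
`K(k) = ∫₀^{π/2} (1 − k² sin²α)^{−1/2} dα`. -/
noncomputable def ellK (k : ℝ) : ℝ :=
  ∫ α in (0 : ℝ)..(π / 2), 1 / Real.sqrt (1 - k ^ 2 * Real.sin α ^ 2)

/-- The integrand of `ellK` is `π`-periodic and symmetric about `π / 2`, so its integral over a full turn is
four times the one over a quarter turn; the substitution `u ↦ π / 2 - u` only shifts the period. -/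
lemma integral_full_turn (k : ℝ) (hk : k ^ 2 < 1) :
    (∫ u in (0 : ℝ)..(2 * π), 1 / Real.sqrt (1 - k ^ 2 * Real.sin (π / 2 - u) ^ 2)) = 4 * ellK k := by
  set F : ℝ → ℝ := fun α => 1 / Real.sqrt (1 - k ^ 2 * Real.sin α ^ 2) with hF
  have hpos : ∀ α, 0 < 1 - k ^ 2 * Real.sin α ^ 2 := fun α => by
    nlinarith [Real.sin_sq_le_one α, sq_nonneg (Real.sin α), sq_nonneg k]
  have hcont : Continuous F :=
    continuous_const.div (by fun_prop) fun α => (Real.sqrt_pos.2 (hpos α)).ne'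
  have hint : ∀ a b, IntervalIntegrable F volume a b := fun a b => hcont.intervalIntegrable a b
  have hper : Function.Periodic F π := fun α => by simp [hF, Real.sin_add_pi]
  have hsym : ∀ α, F (π - α) = F α := fun α => by simp [hF, Real.sin_pi_sub]
  have hper2 : Function.Periodic F (2 * π) := by simpa using hper.nat_mul 2
  have h1 : ∫ u in (0 : ℝ)..(2 * π), F (π / 2 - u) = ∫ u in (0 : ℝ)..(2 * π), F u := by
    rw [intervalIntegral.integral_comp_sub_left F (π / 2)]
    have := hper2.intervalIntegral_add_eq (π / 2 - 2 * π) 0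
    simpa using this
  have h2 : ∫ u in π..(2 * π), F u = ∫ u in (0 : ℝ)..π, F u := by
    have := hper.intervalIntegral_add_eq π 0
    rwa [zero_add, ← two_mul] at this
  have h3 : ∫ u in (π / 2)..π, F u = ∫ u in (0 : ℝ)..(π / 2), F u := by
    have := intervalIntegral.integral_comp_sub_left F (a := 0) (b := π / 2) π
    simp only [hsym] at this
    rw [this]
    congr 1 <;> ring
  have h4 := intervalIntegral.integral_add_adjacent_intervals (hint 0 π) (hint π (2 * π))
  have h5 := intervalIntegral.integral_add_adjacent_intervals (hint 0 (π / 2)) (hint (π / 2) π)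
  change ∫ u in (0 : ℝ)..(2 * π), F (π / 2 - u) = 4 * ∫ u in (0 : ℝ)..(π / 2), F u
  linarith

/-- The total mass of the universal measure on the caustic is
`∫₀^{2π} κ_c(u)^{2/3}·‖γ_c'(u)‖ du = (4(a_c b_c)^{2/3}/a_c)·K(e_c)`, where
`e_c = √(a_c² − b_c²)/a_c` is the eccentricity of the caustic. -/
theorem stmt9 (ac bc : ℝ) (hab : bc < ac) (hb : 0 < bc) :
    (∫ u in (0 : ℝ)..(2 * π),
        curv (fun s => ac * Real.cos s) (fun s => bc * Real.sin s) u ^ ((2 : ℝ) / 3) *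
          Real.sqrt ((deriv (fun s => ac * Real.cos s) u) ^ 2 +
            (deriv (fun s => bc * Real.sin s) u) ^ 2)) =
      4 * (ac * bc) ^ ((2 : ℝ) / 3) / ac * ellK (Real.sqrt (ac ^ 2 - bc ^ 2) / ac) := by
  have ha : 0 < ac := hb.trans hab
  have hsq : 0 ≤ ac ^ 2 - bc ^ 2 := by nlinarith
  have hk : (Real.sqrt (ac ^ 2 - bc ^ 2) / ac) ^ 2 = (ac ^ 2 - bc ^ 2) / ac ^ 2 := by
    rw [div_pow, Real.sq_sqrt hsq]
  have hk1 : (Real.sqrt (ac ^ 2 - bc ^ 2) / ac) ^ 2 < 1 := by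
    rw [hk, div_lt_one (by positivity)]
    nlinarith
  have dx : deriv (fun s => ac * Real.cos s) = fun s => -(ac * Real.sin s) := by
    ext s; simp
  have dy : deriv (fun s => bc * Real.sin s) = fun s => bc * Real.cos s := by
    ext s; simp
  have ddx : deriv (fun s => -(ac * Real.sin s)) = fun s => -(ac * Real.cos s) := by
    ext s; simp
  have ddy : deriv (fun s => bc * Real.cos s) = fun s => -(bc * Real.sin s) := by
    ext s; simp
  have hpt : ∀ u, curv (fun s => ac * Real.cos s) (fun s => bc * Real.sin s) u ^ ((2 : ℝ) / 3) *
          Real.sqrt ((deriv (fun s => ac * Real.cos s) u) ^ 2 +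
            (deriv (fun s => bc * Real.sin s) u) ^ 2) =
      (ac * bc) ^ ((2 : ℝ) / 3) / ac *
        (1 / Real.sqrt (1 - (Real.sqrt (ac ^ 2 - bc ^ 2) / ac) ^ 2 * Real.sin (π / 2 - u) ^ 2)) := by
    intro u
    have hcs := Real.sin_sq_add_cos_sq u
    rw [curv, dx, dy, ddx, ddy, hk, Real.sin_pi_div_two_sub]
    dsimp only
    set D := (-(ac * Real.sin u)) ^ 2 + (bc * Real.cos u) ^ 2 with hD
    have hDpos : 0 < D := by
      have : D = bc ^ 2 + (ac ^ 2 - bc ^ 2) * Real.sin u ^ 2 := by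
        rw [hD]; linear_combination bc ^ 2 * hcs
      rw [this]; positivity
    have hnum : -(ac * Real.sin u) * -(bc * Real.sin u) - bc * Real.cos u * -(ac * Real.cos u)
        = ac * bc := by linear_combination ac * bc * hcs
    have hfac : 1 - (ac ^ 2 - bc ^ 2) / ac ^ 2 * Real.cos u ^ 2 = D / ac ^ 2 := by
      rw [hD]; field_simp; linear_combination -ac ^ 2 * hcs
    have hs : 0 < Real.sqrt D := Real.sqrt_pos.2 hDpos
    have hss : Real.sqrt D ^ 2 = D := Real.sq_sqrt hDpos.le
    rw [hnum, hfac, Real.sqrt_div hDpos.le, Real.sqrt_sq ha.le,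
      Real.div_rpow (by positivity) (by positivity), ← Real.rpow_mul hDpos.le,
      show (3 : ℝ) / 2 * (2 / 3) = 1 by norm_num, Real.rpow_one]
    nth_rewrite 1 [← hss]
    field_simp
  simp_rw [hpt]
  rw [intervalIntegral.integral_const_mul, integral_full_turn _ hk1]
  ring
end

section
/- For all real p, q with 0 ≤ p < 1 and 0 < q < 1, ∫₀^{2π} √(1 − p cos²u)/(1 − q cos²u) du = (4/q)·((q − p)·Π(q, √p) + p·K(√p)). -/
/-!
The integrand depends on `u` only through `cos² u`, so the integral over a full period is four times
the integral over `[0, π/2]`, where `cos²` may be replaced by `sin²`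
(`integral_cos_sq_full_period`). There the identity is an integrated partial fraction: with
`x = sin² α`, from `q (1 - p x) = (q - p) + p (1 - q x)` one gets
`√(1 - p x) / (1 - q x) = q⁻¹ ((q - p) / ((1 - q x) √(1 - p x)) + p / √(1 - p x))`.
-/

open Real MeasureTheory

/-- The complete elliptic integral of the third kind
`Π(n, k) = ∫₀^{π/2} ((1 − n sin²α)·√(1 − k² sin²α))^{−1} dα`. -/
noncomputable def ellPi (n k : ℝ) : ℝ :=
  ∫ α in (0 : ℝ)..(π / 2),
    1 / ((1 - n * Real.sin α ^ 2) * Real.sqrt (1 - k ^ 2 * Real.sin α ^ 2))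

lemma integral_cos_sq_full_period (g : ℝ → ℝ) (hg : Continuous fun u => g (cos u ^ 2)) :
    ∫ u in (0 : ℝ)..(2 * π), g (cos u ^ 2) = 4 * ∫ u in (0 : ℝ)..(π / 2), g (sin u ^ 2) := by
  have h1 : ∫ u in (0 : ℝ)..(π / 2), g (cos u ^ 2) = ∫ u in (0 : ℝ)..(π / 2), g (sin u ^ 2) := by
    have h := intervalIntegral.integral_comp_sub_left (a := 0) (b := π / 2)
      (fun u => g (cos u ^ 2)) (π / 2)
    simpa [cos_pi_div_two_sub] using h.symm
  have h2 : ∫ u in (π / 2)..π, g (cos u ^ 2) = ∫ u in (0 : ℝ)..(π / 2), g (sin u ^ 2) := by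
    have h := intervalIntegral.integral_comp_add_right (a := 0) (b := π / 2)
      (fun u => g (cos u ^ 2)) (π / 2)
    simpa [cos_add_pi_div_two] using h.symm
  have h3 : ∫ u in π..(2 * π), g (cos u ^ 2) = ∫ u in (0 : ℝ)..π, g (cos u ^ 2) := by
    have h := intervalIntegral.integral_comp_add_right (a := 0) (b := π)
      (fun u => g (cos u ^ 2)) π
    simpa [cos_add_pi, two_mul] using h.symm
  have hi (a b : ℝ) : IntervalIntegrable (fun u => g (cos u ^ 2)) volume a b :=
    hg.intervalIntegrable a b
  rw [← intervalIntegral.integral_add_adjacent_intervals (hi 0 π) (hi π (2 * π)), h3,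
    ← intervalIntegral.integral_add_adjacent_intervals (hi 0 (π / 2)) (hi (π / 2) π), h1, h2]
  ring

lemma one_sub_mul_pos {r x : ℝ} (hr0 : 0 ≤ r) (hr1 : r < 1) (hx : x ≤ 1) :
    0 < 1 - r * x := by
  nlinarith [mul_le_mul_of_nonneg_left hx hr0]

/-- For all real `p`, `q` with `0 ≤ p < 1` and `0 < q < 1`,
`∫₀^{2π} √(1 − p cos²u)/(1 − q cos²u) du = (4/q)·((q − p)·Π(q, √p) + p·K(√p))`. -/
theorem stmt10 (p q : ℝ) (hp0 : 0 ≤ p) (hp1 : p < 1) (hq0 : 0 < q) (hq1 : q < 1) :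
    (∫ u in (0 : ℝ)..(2 * π),
        Real.sqrt (1 - p * Real.cos u ^ 2) / (1 - q * Real.cos u ^ 2)) =
      (4 / q) * ((q - p) * ellPi q (Real.sqrt p) + p * ellK (Real.sqrt p)) := by
  have hps (u : ℝ) : 0 < 1 - p * sin u ^ 2 := one_sub_mul_pos hp0 hp1 (sin_sq_le_one u)
  have hqs (u : ℝ) : 0 < 1 - q * sin u ^ 2 := one_sub_mul_pos hq0.le hq1 (sin_sq_le_one u)
  have hqc (u : ℝ) : 0 < 1 - q * cos u ^ 2 := one_sub_mul_pos hq0.le hq1 (cos_sq_le_one u)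
  rw [integral_cos_sq_full_period (fun x => √(1 - p * x) / (1 - q * x))
    (Continuous.div (by fun_prop) (by fun_prop) fun u => (hqc u).ne')]
  have hK : IntervalIntegrable (fun u => 1 / √(1 - p * sin u ^ 2)) volume 0 (π / 2) :=
    (Continuous.div (by fun_prop) (by fun_prop)
      fun u => (sqrt_pos.2 (hps u)).ne').intervalIntegrable _ _
  have hPi : IntervalIntegrable
      (fun u => 1 / ((1 - q * sin u ^ 2) * √(1 - p * sin u ^ 2))) volume 0 (π / 2) :=
    (Continuous.div (by fun_prop) (by fun_prop)
      fun u => (mul_pos (hqs u) (sqrt_pos.2 (hps u))).ne').intervalIntegrable _ _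
  simp only [ellK, ellPi, sq_sqrt hp0]
  rw [← intervalIntegral.integral_const_mul (q - p), ← intervalIntegral.integral_const_mul p,
    ← intervalIntegral.integral_add (hPi.const_mul _) (hK.const_mul _),
    ← intervalIntegral.integral_const_mul, ← intervalIntegral.integral_const_mul]
  refine intervalIntegral.integral_congr fun u _ => ?_
  have hs := sqrt_pos.2 (hps u)
  have hsq := sq_sqrt (hps u).le
  have hq' := hqs u
  generalize √(1 - p * sin u ^ 2) = s at *
  field_simp
  rw [hsq]
  ring
end

section
/- Define the chord-length function ℓ(u) = 2ab√λ·((a² − λ) − c²cos²u)/(b²(a² − λ) − λc²cos²u) and the universal-measure density ρ(u) = (a_c b_c)^{2/3} / √(a_c² sin²u + b_c² cos²u). Then the measure-weighted average chord length satisfies (∫₀^{2π} ℓ(u)ρ(u) du) / (∫₀^{2π} ρ(u) du) = (2a/(b√λ·K(k)))·(b²·K(k) + (λ − b²)·Π(n, k)), where k = c/a_c and n = λc²/(b²(a² − λ)). -/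
open Real MeasureTheory

/-!
Put `A = a² - lam = ac²`. Then `ac² sin² u + bc² cos² u = A (1 - k² cos² u)` and the denominator of
`l` is `b² A (1 - n cos² u)`, so both integrands are functions of `cos² u`, and their integrals over
`[0, 2π]` are four times the integrals over `[0, π/2]` with `sin²` in place of `cos²`
(`integral_comp_cos_sq_full_period`). Since `k² / n = b² / lam`, the partial fraction decomposition
`lam (1 - k² x) / (1 - n x) = b² + (lam - b²) / (1 - n x)` splits the numerator integral into a
combination of `ellK k` and `ellPi n k`; the common factor `(ac bc)^(2/3) / ac` cancels.
-/

/-- A function of `cos²` integrates over a full period to four times the integral of the same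
function of `sin²` over a quarter period. -/
lemma integral_comp_cos_sq_full_period (g : ℝ → ℝ) (hg : Continuous fun u => g (Real.sin u ^ 2)) :
    ∫ u in (0 : ℝ)..(2 * π), g (Real.cos u ^ 2) =
      4 * ∫ u in (0 : ℝ)..(π / 2), g (Real.sin u ^ 2) := by
  set h : ℝ → ℝ := fun u => g (Real.sin u ^ 2) with hh
  have hint : ∀ p q, IntervalIntegrable h volume p q := fun p q => hg.intervalIntegrable p q
  have hper : Function.Periodic h π := by
    intro u
    simp [hh, Real.sin_add_pi]
  have e1 : ∫ u in (0 : ℝ)..(2 * π), g (Real.cos u ^ 2) = ∫ u in (π / 2)..(π / 2 + 2 * π), h u := by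
    have : ∀ u, g (Real.cos u ^ 2) = h (u + π / 2) := by
      intro u
      simp [hh, Real.sin_add_pi_div_two]
    simp_rw [this]
    rw [intervalIntegral.integral_comp_add_right h]
    congr 1 <;> ring
  have shift : ∀ t, ∫ u in t..(t + π), h u = ∫ u in (0 : ℝ)..π, h u := by
    intro t
    simpa using hper.intervalIntegral_add_eq t 0
  have e2 : ∫ u in (π / 2)..(π / 2 + 2 * π), h u = 2 * ∫ u in (0 : ℝ)..π, h u := by
    rw [← intervalIntegral.integral_add_adjacent_intervals (hint (π / 2) (π / 2 + π)) (hint _ _),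
      show π / 2 + 2 * π = (π / 2 + π) + π by ring, shift, shift]
    ring
  have e3 : ∫ u in (π / 2)..π, h u = ∫ u in (0 : ℝ)..(π / 2), h u := by
    have : ∀ u, h u = h (π - u) := by
      intro u
      simp [hh, Real.sin_pi_sub]
    rw [intervalIntegral.integral_congr (g := fun u => h (π - u)) (fun u _ => this u),
      intervalIntegral.integral_comp_sub_left h]
    congr 1 <;> ring
  rw [e1, e2, ← intervalIntegral.integral_add_adjacent_intervals (hint 0 (π / 2)) (hint _ π), e3]
  ring

/-- With chord-length function
`ℓ(u) = 2ab√λ·((a² − λ) − c²cos²u)/(b²(a² − λ) − λc²cos²u)` and universal-measure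
density `ρ(u) = (a_c b_c)^{2/3}/√(a_c² sin²u + b_c² cos²u)`, the measure-weighted
average chord length satisfies
`(∫₀^{2π} ℓρ du)/(∫₀^{2π} ρ du) = (2a/(b√λ·K(k)))·(b²·K(k) + (λ − b²)·Π(n, k))`,
where `k = c/a_c` and `n = λc²/(b²(a² − λ))`. -/
theorem stmt12 (a b lam : ℝ) (hab : b < a) (hb : 0 < b)
    (hlam0 : 0 < lam) (hlamb : lam < b ^ 2)
    (c ac bc : ℝ) (hc : c = Real.sqrt (a ^ 2 - b ^ 2))
    (hac : ac = Real.sqrt (a ^ 2 - lam)) (hbc : bc = Real.sqrt (b ^ 2 - lam))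
    (l rho : ℝ → ℝ)
    (hl : l = fun u => 2 * a * b * Real.sqrt lam * ((a ^ 2 - lam) - c ^ 2 * Real.cos u ^ 2) /
      (b ^ 2 * (a ^ 2 - lam) - lam * c ^ 2 * Real.cos u ^ 2))
    (hrho : rho = fun u => (ac * bc) ^ ((2 : ℝ) / 3) /
      Real.sqrt (ac ^ 2 * Real.sin u ^ 2 + bc ^ 2 * Real.cos u ^ 2))
    (k n : ℝ) (hk : k = c / ac) (hn : n = lam * c ^ 2 / (b ^ 2 * (a ^ 2 - lam))) :
    (∫ u in (0 : ℝ)..(2 * π), l u * rho u) / (∫ u in (0 : ℝ)..(2 * π), rho u) =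
      (2 * a / (b * Real.sqrt lam * ellK k)) *
        (b ^ 2 * ellK k + (lam - b ^ 2) * ellPi n k) := by
  have hA : 0 < a ^ 2 - lam := by nlinarith
  have hc2 : c ^ 2 = a ^ 2 - b ^ 2 := by rw [hc, Real.sq_sqrt]; nlinarith
  have hac0 : 0 < ac := hac ▸ Real.sqrt_pos.2 hA
  have hbc0 : 0 < bc := hbc ▸ Real.sqrt_pos.2 (by linarith)
  have hac2 : ac ^ 2 = a ^ 2 - lam := by rw [hac, Real.sq_sqrt hA.le]
  have hbc2 : bc ^ 2 = b ^ 2 - lam := by rw [hbc, Real.sq_sqrt (by linarith)]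
  have ha0 : 0 < a := hb.trans hab
  have hkA : k ^ 2 * (a ^ 2 - lam) = c ^ 2 := by
    rw [hk, div_pow, hac2]; field_simp
  have hnA : n * (b ^ 2 * (a ^ 2 - lam)) = lam * c ^ 2 := by
    rw [hn]; field_simp
  have hk1 : k ^ 2 < 1 := by
    by_contra! h
    nlinarith [mul_le_mul_of_nonneg_right h hA.le]
  have hn1 : n < 1 := by
    by_contra! h
    have hbA : 0 < b ^ 2 * (a ^ 2 - lam) := by positivity
    have h1 := mul_le_mul_of_nonneg_right h hbA.le
    rw [hnA, hc2] at h1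
    nlinarith [mul_pos (sub_pos.2 hlamb) (pow_pos ha0 2)]
  have hD : ∀ m x : ℝ, m < 1 → 0 ≤ x → x ≤ 1 → 0 < 1 - m * x := by
    intro m x hm h0 h1
    by_cases hm0 : 0 ≤ m
    · nlinarith
    · nlinarith
  have hkS : ∀ u, 0 < 1 - k ^ 2 * Real.sin u ^ 2 :=
    fun u => hD _ _ hk1 (sq_nonneg _) (Real.sin_sq_le_one u)
  have hnS : ∀ u, 0 < 1 - n * Real.sin u ^ 2 :=
    fun u => hD _ _ hn1 (sq_nonneg _) (Real.sin_sq_le_one u)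
  have contK : Continuous fun u => 1 / Real.sqrt (1 - k ^ 2 * Real.sin u ^ 2) :=
    continuous_const.div (by fun_prop) fun u => (Real.sqrt_pos.2 (hkS u)).ne'
  have contP : Continuous fun u =>
      1 / ((1 - n * Real.sin u ^ 2) * Real.sqrt (1 - k ^ 2 * Real.sin u ^ 2)) :=
    continuous_const.div (by fun_prop)
      fun u => (mul_pos (hnS u) (Real.sqrt_pos.2 (hkS u))).ne'
  have hK : 0 < ellK k :=
    intervalIntegral.intervalIntegral_pos_of_pos_on (contK.intervalIntegrable _ _)
      (fun u _ => one_div_pos.2 (Real.sqrt_pos.2 (hkS u))) (by positivity)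
  set M : ℝ := (ac * bc) ^ ((2 : ℝ) / 3) / ac with hM
  have hM0 : 0 < M := by positivity
  have hr : ∀ u, rho u = M * (1 / Real.sqrt (1 - k ^ 2 * Real.cos u ^ 2)) := by
    intro u
    have : ac ^ 2 * Real.sin u ^ 2 + bc ^ 2 * Real.cos u ^ 2 =
        ac ^ 2 * (1 - k ^ 2 * Real.cos u ^ 2) := by
      rw [Real.sin_sq, hac2, hbc2]
      linear_combination Real.cos u ^ 2 * (hkA + hc2)
    simp only [hrho, this]
    rw [Real.sqrt_mul (sq_nonneg _), Real.sqrt_sq hac0.le, hM]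
    field_simp
  have hs0 : 0 < Real.sqrt lam := Real.sqrt_pos.2 hlam0
  have hs2 : Real.sqrt lam ^ 2 = lam := Real.sq_sqrt hlam0.le
  have hL : ∀ u, l u = 2 * a / (b * Real.sqrt lam) *
      (b ^ 2 + (lam - b ^ 2) * (1 / (1 - n * Real.cos u ^ 2))) := by
    intro u
    have hn0 := hD n _ hn1 (sq_nonneg (Real.cos u)) (Real.cos_sq_le_one u)
    have e : b ^ 2 * (a ^ 2 - lam) - lam * c ^ 2 * Real.cos u ^ 2 =
        b ^ 2 * (a ^ 2 - lam) * (1 - n * Real.cos u ^ 2) := by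
      linear_combination Real.cos u ^ 2 * hnA
    have e2 : lam * (a ^ 2 - lam - c ^ 2 * Real.cos u ^ 2) =
        (a ^ 2 - lam) * (b ^ 2 * (1 - n * Real.cos u ^ 2) + (lam - b ^ 2)) := by
      linear_combination Real.cos u ^ 2 * hnA
    have e3 : b ^ 2 + (lam - b ^ 2) * (1 / (1 - n * Real.cos u ^ 2)) =
        (b ^ 2 * (1 - n * Real.cos u ^ 2) + (lam - b ^ 2)) / (1 - n * Real.cos u ^ 2) := by
      field_simp
    simp only [hl]
    rw [e, e3, div_mul_div_comm, div_eq_div_iff (by positivity) (by positivity)]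
    linear_combination
      (2 * a * b ^ 2 * (1 - n * Real.cos u ^ 2)) * e2 +
      (2 * a * b ^ 2 * (a ^ 2 - lam - c ^ 2 * Real.cos u ^ 2) * (1 - n * Real.cos u ^ 2)) * hs2
  have hden : ∫ u in (0 : ℝ)..(2 * π), rho u = 4 * (M * ellK k) := by
    simp_rw [hr]
    rw [integral_comp_cos_sq_full_period (fun x => M * (1 / Real.sqrt (1 - k ^ 2 * x))) (contK.const_mul M),
      intervalIntegral.integral_const_mul, ellK]
  have hnum : ∫ u in (0 : ℝ)..(2 * π), l u * rho u =
      4 * (M * (2 * a / (b * Real.sqrt lam)) *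
        (b ^ 2 * ellK k + (lam - b ^ 2) * ellPi n k)) := by
    have e : ∀ u, l u * rho u = M * (2 * a / (b * Real.sqrt lam)) *
        (b ^ 2 * (1 / Real.sqrt (1 - k ^ 2 * Real.cos u ^ 2)) + (lam - b ^ 2) *
          (1 / ((1 - n * Real.cos u ^ 2) * Real.sqrt (1 - k ^ 2 * Real.cos u ^ 2)))) := by
      intro u
      rw [hL, hr, ← one_div_mul_one_div]
      ring
    simp_rw [e]
    rw [integral_comp_cos_sq_full_period (fun x => M * (2 * a / (b * Real.sqrt lam)) *
        (b ^ 2 * (1 / Real.sqrt (1 - k ^ 2 * x)) + (lam - b ^ 2) *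
          (1 / ((1 - n * x) * Real.sqrt (1 - k ^ 2 * x)))))
        (((contK.const_mul _).add (contP.const_mul _)).const_mul _),
      intervalIntegral.integral_const_mul,
      intervalIntegral.integral_add ((contK.const_mul _).intervalIntegrable _ _)
        ((contP.const_mul _).intervalIntegrable _ _),
      intervalIntegral.integral_const_mul, intervalIntegral.integral_const_mul, ellK, ellPi]
  rw [hnum, hden]
  field_simp
end

section
/- Let N ≥ 3 and let P₁, …, P_N (indices taken modulo N) be points of the billiard ellipse E such that P_{i+1} ≠ P_i and P_{i+1} ≠ P_{i−1} for all i, and such that for each i the line through P_i and P_{i+1} is tangent to the caustic E_c. Set v_i = (P_{i+1} − P_i)/‖P_{i+1} − P_i‖, let L = Σᵢ ‖P_{i+1} − P_i‖ be the perimeter, and let cos θ_i = −⟨v_{i−1}, v_i⟩ be the cosine of the vertex angle at P_i. Then Σ_{i=1}^{N} cos θ_i = J·L − N, where J = √λ/(ab). -/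
/-!
Write `n = (x / a², y / b²)` for the normal of `E` at `(x, y)`. A chord `PQ` of `E` with unit
direction `v` satisfies `⟨v, n_P⟩ = -⟨v, n_Q⟩ < 0`, and tangency to the confocal caustic fixes the
common absolute value as `J` (Joachimsthal's integral, `chord_joachimsthal`). Hence at each vertex
the incoming and outgoing unit directions `u`, `w` have opposite normal components `J` and `-J`.
Since consecutive sides are not the same chord, `u + w ≠ 0`, so `u - w` is a multiple of
`n`; as `⟨P, n⟩ = 1`, the multiple is `⟨P, u - w⟩`, and pairing with `u` gives
`1 - ⟨u, w⟩ = J ⟨P, u - w⟩` (`vertex_cos`). Summation by parts around the closed polygon turns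
`Σ ⟨Pᵢ, vᵢ₋₁ - vᵢ⟩` into `Σ ⟨Pᵢ₊₁ - Pᵢ, vᵢ⟩ = L`.
-/

open Real

/-- A line through `P` with direction `d` meeting the ellipse with semi-axes `|α|`, `|β|` in
exactly one point satisfies the vanishing-discriminant condition. -/
lemma tangent_discr {α β : ℝ} (hα : 0 < α ^ 2) (hβ : 0 < β ^ 2) {P d : ℝ × ℝ} (hd : d ≠ 0)
    (h : ∃ p, {q : ℝ × ℝ | ∃ t : ℝ, q = P + t • d} ∩
      {p : ℝ × ℝ | p.1 ^ 2 / α ^ 2 + p.2 ^ 2 / β ^ 2 = 1} = {p}) :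
    (P.1 * d.2 - P.2 * d.1) ^ 2 = α ^ 2 * d.2 ^ 2 + β ^ 2 * d.1 ^ 2 := by
  obtain ⟨p, hp⟩ := h
  obtain ⟨⟨t, ht⟩, hpE⟩ : p ∈ {q : ℝ × ℝ | ∃ t : ℝ, q = P + t • d} ∩
      {p : ℝ × ℝ | p.1 ^ 2 / α ^ 2 + p.2 ^ 2 / β ^ 2 = 1} := by rw [hp]; rfl
  obtain ⟨x, y⟩ := P
  obtain ⟨m, n⟩ := d
  subst ht
  simp only [Set.mem_ofPred_eq, Prod.fst_add, Prod.snd_add, Prod.smul_fst, Prod.smul_snd,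
    smul_eq_mul] at hpE ⊢
  generalize α ^ 2 = A at *
  generalize β ^ 2 = B at *
  have hmn : 0 < B * m ^ 2 + A * n ^ 2 := by
    by_cases hm : m = 0
    · have hn : n ≠ 0 := by
        rintro rfl
        exact hd (by simp [hm])
      positivity
    · positivity
  -- By Vieta, `s` is the parameter of the second intersection point.
  set K := B * m ^ 2 + A * n ^ 2 with hK
  set H := B * x * m + A * y * n with hH
  obtain ⟨s, hs⟩ : ∃ s, K * s = -2 * H - K * t := ⟨(-2 * H - K * t) / K, by field_simp⟩
  have hq : B * (x + t * m) ^ 2 + A * (y + t * n) ^ 2 = A * B := by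
    field_simp at hpE
    linarith
  have hq' : B * (x + s * m) ^ 2 + A * (y + s * n) ^ 2 = A * B := by
    rw [← hq]
    have : (s - t) * (K * s + K * t + 2 * H) = 0 := by rw [hs]; ring
    rw [hK, hH] at this
    linear_combination this
  have hmem : ((x, y) + s • (m, n) : ℝ × ℝ) ∈ ({(x, y) + t • (m, n)} : Set (ℝ × ℝ)) := by
    rw [← hp]
    refine ⟨⟨s, rfl⟩, ?_⟩
    simp only [Set.mem_ofPred_eq, Prod.fst_add, Prod.snd_add, Prod.smul_fst, Prod.smul_snd,
      smul_eq_mul]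
    field_simp
    linarith
  have hst : s = t := by
    have h1 := add_left_cancel (Set.mem_singleton_iff.mp hmem)
    exact smul_left_injective ℝ hd h1
  subst hst
  have hKs : K * s = -H := by linarith
  have hfin : A * B * ((x * n - y * m) ^ 2 - K) = 0 := by
    have e : K * (K * s ^ 2 + 2 * H * s + B * x ^ 2 + A * y ^ 2 - A * B) = 0 := by
      rw [hK, hH]
      linear_combination (B * m ^ 2 + A * n ^ 2) * hq
    have e2 : K * (B * x ^ 2 + A * y ^ 2 - A * B) = H ^ 2 := by
      linear_combination e - (K * s + H) * hKs
    rw [hK, hH] at e2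
    rw [hK]
    linear_combination e2
  have := (mul_eq_zero.mp hfin).resolve_left (by positivity)
  rw [hK] at this
  linarith

lemma enorm2_sq (d : ℝ × ℝ) : enorm2 d ^ 2 = d.1 ^ 2 + d.2 ^ 2 :=
  Real.sq_sqrt (by positivity)

lemma enorm2_pos {d : ℝ × ℝ} (hd : d ≠ 0) : 0 < enorm2 d := by
  refine Real.sqrt_pos.mpr ?_
  by_cases hm : d.1 = 0
  · have hn : d.2 ≠ 0 := fun h => hd (Prod.ext hm h)
    positivity
  · positivity

/-- Joachimsthal's integral. If `P` and `P + l v` lie on the ellipse, `v` is a unit vector, `l > 0`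
and the chord satisfies the tangency condition for the confocal caustic, then `v` pairs
with the normals at the two ends to `-J` and `J`; moreover `J` determines `l` from `v`. -/
lemma chord_joachimsthal {a b lam J x y m n l : ℝ} (ha : 0 < a) (hb : 0 < b) (hJ0 : 0 < J)
    (hJ : J ^ 2 = lam / (a ^ 2 * b ^ 2)) (hl : 0 < l) (hv : m ^ 2 + n ^ 2 = 1)
    (hP : x ^ 2 / a ^ 2 + y ^ 2 / b ^ 2 = 1)
    (hQ : (x + l * m) ^ 2 / a ^ 2 + (y + l * n) ^ 2 / b ^ 2 = 1)
    (ht : (x * n - y * m) ^ 2 = (a ^ 2 - lam) * n ^ 2 + (b ^ 2 - lam) * m ^ 2) :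
    m * (x / a ^ 2) + n * (y / b ^ 2) = -J ∧
    m * ((x + l * m) / a ^ 2) + n * ((y + l * n) / b ^ 2) = J ∧
    l * (m ^ 2 / a ^ 2 + n ^ 2 / b ^ 2) = 2 * J := by
  have hpos : 0 < m ^ 2 / a ^ 2 + n ^ 2 / b ^ 2 := by
    by_cases hm : m = 0
    · have hn : n ≠ 0 := by
        rintro rfl
        simp [hm] at hv
      positivity
    · positivity
  set S := m * (x / a ^ 2) + n * (y / b ^ 2) with hS
  set W := m ^ 2 / a ^ 2 + n ^ 2 / b ^ 2 with hW
  have h1 : l * (2 * S + l * W) = 0 := by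
    rw [hS, hW]
    linear_combination hQ - hP
  have h2 : 2 * S + l * W = 0 := (mul_eq_zero.mp h1).resolve_left hl.ne'
  have h3 : S ^ 2 = J ^ 2 := by
    have e : S ^ 2 = W * (x ^ 2 / a ^ 2 + y ^ 2 / b ^ 2) -
        (x * n - y * m) ^ 2 / (a ^ 2 * b ^ 2) := by
      rw [hS, hW]; field_simp; ring
    rw [e, hP, hJ, ht, hW]
    field_simp
    linear_combination lam * hv
  have h4 : S = -J := by
    rcases sq_eq_sq_iff_eq_or_eq_neg.mp h3 with h | h
    · have := mul_pos hl hpos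
      linarith
    · exact h
  refine ⟨h4, ?_, by linarith⟩
  have : m * ((x + l * m) / a ^ 2) + n * ((y + l * n) / b ^ 2) = S + l * W := by
    rw [hS, hW]; ring
  linarith

/-- Unit vectors `u`, `w` with opposite components `J`, `-J` along `(n₁, n₂)` and `u + w ≠ 0`
are mirror images, so `u - w` is normal; the pairing with `(x, y)` recovers the multiple. -/
lemma vertex_cos {x y n₁ n₂ J u₁ u₂ w₁ w₂ : ℝ} (hn : x * n₁ + y * n₂ = 1)
    (hu : u₁ ^ 2 + u₂ ^ 2 = 1) (hw : w₁ ^ 2 + w₂ ^ 2 = 1)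
    (hun : u₁ * n₁ + u₂ * n₂ = J) (hwn : w₁ * n₁ + w₂ * n₂ = -J)
    (hne : ¬ (w₁ = -u₁ ∧ w₂ = -u₂)) :
    -(u₁ * w₁ + u₂ * w₂) = J * ((x * u₁ + y * u₂) - (x * w₁ + y * w₂)) - 1 := by
  have hc : (u₁ - w₁) * n₂ - (u₂ - w₂) * n₁ = 0 := by
    by_contra hc
    have h1 : (u₁ + w₁) * ((u₁ - w₁) * n₂ - (u₂ - w₂) * n₁) = 0 := by
      linear_combination n₂ * (hu - hw) - (u₂ - w₂) * (hun + hwn)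
    have h2 : (u₂ + w₂) * ((u₁ - w₁) * n₂ - (u₂ - w₂) * n₁) = 0 := by
      linear_combination (u₁ - w₁) * (hun + hwn) - n₁ * (hu - hw)
    have h3 := (mul_eq_zero.mp h1).resolve_right hc
    have h4 := (mul_eq_zero.mp h2).resolve_right hc
    exact hne ⟨by linarith, by linarith⟩
  set k := (x * u₁ + y * u₂) - (x * w₁ + y * w₂) with hk
  have e1 : u₁ - w₁ = k * n₁ := by
    rw [hk]; linear_combination (w₁ - u₁) * hn + y * hc
  have e2 : u₂ - w₂ = k * n₂ := by
    rw [hk]; linear_combination (w₂ - u₂) * hn - x * hc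
  linear_combination k * hun + u₁ * e1 + u₂ * e2 - hu

/-- Let `N ≥ 3` and let `P₁, …, P_N` (indices mod `N`) be points of
the billiard ellipse `E` with `P_{i+1} ≠ P_i`, `P_{i+1} ≠ P_{i−1}`, each side
tangent to the caustic `E_c`.  With `v_i = (P_{i+1} − P_i)/‖P_{i+1} − P_i‖`,
perimeter `L = Σ‖P_{i+1} − P_i‖` and `cos θ_i = −⟨v_{i−1}, v_i⟩`, we have
`Σ cos θ_i = J·L − N` where `J = √λ/(ab)`. -/
theorem stmt13 (a b lam : ℝ) (hab : b < a) (hb : 0 < b)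
    (hlam0 : 0 < lam) (hlamb : lam < b ^ 2)
    (ac bc : ℝ) (hac : ac = Real.sqrt (a ^ 2 - lam)) (hbc : bc = Real.sqrt (b ^ 2 - lam))
    (E Ec : Set (ℝ × ℝ))
    (hE : E = {p : ℝ × ℝ | p.1 ^ 2 / a ^ 2 + p.2 ^ 2 / b ^ 2 = 1})
    (hEc : Ec = {p : ℝ × ℝ | p.1 ^ 2 / ac ^ 2 + p.2 ^ 2 / bc ^ 2 = 1})
    (J : ℝ) (hJ : J = Real.sqrt lam / (a * b))
    (N : ℕ) (hN : 3 ≤ N)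
    (P : ℤ → ℝ × ℝ) (hper : ∀ i : ℤ, P (i + N) = P i)
    (hPE : ∀ i : ℤ, P i ∈ E)
    (hne1 : ∀ i : ℤ, P (i + 1) ≠ P i)
    (hne2 : ∀ i : ℤ, P (i + 1) ≠ P (i - 1))
    (htan : ∀ i : ℤ, ∃ p,
      {q : ℝ × ℝ | ∃ t : ℝ, q = P i + t • (P (i + 1) - P i)} ∩ Ec = {p})
    (v : ℤ → ℝ × ℝ)
    (hv : ∀ i : ℤ, v i = (enorm2 (P (i + 1) - P i))⁻¹ • (P (i + 1) - P i))
    (L : ℝ) (hL : L = ∑ i ∈ Finset.range N, enorm2 (P ((i : ℤ) + 1) - P (i : ℤ))) :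
    ∑ i ∈ Finset.range N, -dot2 (v ((i : ℤ) - 1)) (v (i : ℤ)) = J * L - N := by
  have ha : 0 < a := hb.trans hab
  have hb2 : 0 < b ^ 2 - lam := by linarith
  have ha2 : 0 < a ^ 2 - lam := by nlinarith
  have hac2 : ac ^ 2 = a ^ 2 - lam := by rw [hac, Real.sq_sqrt ha2.le]
  have hbc2 : bc ^ 2 = b ^ 2 - lam := by rw [hbc, Real.sq_sqrt hb2.le]
  have hJ0 : 0 < J := by rw [hJ]; have := Real.sqrt_pos.mpr hlam0; positivity
  have hJ2 : J ^ 2 = lam / (a ^ 2 * b ^ 2) := by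
    rw [hJ, div_pow, Real.sq_sqrt hlam0.le, mul_pow]
  have hd : ∀ i, P (i + 1) - P i ≠ 0 := fun i => sub_ne_zero.mpr (hne1 i)
  have hlpos : ∀ i, 0 < enorm2 (P (i + 1) - P i) := fun i => enorm2_pos (hd i)
  set l : ℤ → ℝ := fun i => enorm2 (P (i + 1) - P i) with hl
  have hlv : ∀ i, P (i + 1) - P i = l i • v i := fun i => by
    rw [hv i, smul_inv_smul₀ (hlpos i).ne']
  have hl1 : ∀ i, (P (i + 1)).1 = (P i).1 + l i * (v i).1 := fun i => by
    have := congrArg Prod.fst (hlv i)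
    simp only [Prod.fst_sub, Prod.smul_fst, smul_eq_mul] at this
    linarith
  have hl2 : ∀ i, (P (i + 1)).2 = (P i).2 + l i * (v i).2 := fun i => by
    have := congrArg Prod.snd (hlv i)
    simp only [Prod.snd_sub, Prod.smul_snd, smul_eq_mul] at this
    linarith
  have hunit : ∀ i, (v i).1 ^ 2 + (v i).2 ^ 2 = 1 := fun i => by
    have h := enorm2_sq (P (i + 1) - P i)
    rw [hlv i] at h
    have h0 : enorm2 (l i • v i) = l i := by rw [← hlv i]
    rw [h0] at h
    simp only [Prod.smul_fst, Prod.smul_snd, smul_eq_mul] at h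
    have h5 := (hlpos i).ne'
    have h6 : l i ^ 2 ≠ 0 := pow_ne_zero 2 h5
    apply mul_left_cancel₀ h6
    linear_combination -h
  have hPE' : ∀ i, (P i).1 ^ 2 / a ^ 2 + (P i).2 ^ 2 / b ^ 2 = 1 := fun i => by
    have := hPE i
    rwa [hE] at this
  have htan' : ∀ i, ((P i).1 * (v i).2 - (P i).2 * (v i).1) ^ 2 =
      (a ^ 2 - lam) * (v i).2 ^ 2 + (b ^ 2 - lam) * (v i).1 ^ 2 := fun i => by
    have h := htan i
    rw [hEc] at h
    have h := tangent_discr (by rw [hac2]; exact ha2) (by rw [hbc2]; exact hb2) (hd i) h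
    rw [hac2, hbc2, hlv i] at h
    simp only [Prod.smul_fst, Prod.smul_snd, smul_eq_mul] at h
    have h6 : l i ^ 2 ≠ 0 := pow_ne_zero 2 (hlpos i).ne'
    apply mul_left_cancel₀ h6
    linear_combination h
  have hch := fun i => chord_joachimsthal ha hb hJ0 hJ2 (hlpos i) (hunit i) (hPE' i)
    (by rw [← hl1 i, ← hl2 i]; exact hPE' (i + 1)) (htan' i)
  have hcos : ∀ i : ℤ, -dot2 (v (i - 1)) (v i) =
      J * (dot2 (P i) (v (i - 1)) - dot2 (P i) (v i)) - 1 := fun i => by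
    obtain ⟨hw, -, hwl⟩ := hch i
    obtain ⟨-, hu, hul⟩ := hch (i - 1)
    have hx := hl1 (i - 1)
    have hy := hl2 (i - 1)
    rw [sub_add_cancel] at hx hy
    have hx' : (P (i - 1)).1 + enorm2 (P (i - 1 + 1) - P (i - 1)) * (v (i - 1)).1 = (P i).1 :=
      hx.symm
    have hy' : (P (i - 1)).2 + enorm2 (P (i - 1 + 1) - P (i - 1)) * (v (i - 1)).2 = (P i).2 :=
      hy.symm
    rw [hx', hy'] at hu
    refine vertex_cos (n₁ := (P i).1 / a ^ 2) (n₂ := (P i).2 / b ^ 2) ?_ (hunit (i - 1))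
      (hunit i) hu hw ?_
    · rw [← hPE' i]; ring
    -- If `w = -u`, both chords lie on one line and have equal length, so they coincide.
    · rintro ⟨h1, h2⟩
      have hll : l i = l (i - 1) := by
        rw [h1, h2, neg_sq, neg_sq] at hwl
        have := hwl.trans hul.symm
        refine mul_right_cancel₀ ?_ this
        intro h0
        rw [h0] at hul
        linarith
      apply hne2 i
      apply Prod.ext
      · rw [hl1 i, hx, h1, hll]; ring
      · rw [hl2 i, hy, h2, hll]; ring
  have hlen : ∀ i : ℤ, l i = dot2 (P (i + 1)) (v i) - dot2 (P i) (v i) := fun i => by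
    simp only [dot2]
    rw [hl1 i, hl2 i]
    linear_combination -l i * hunit i
  have htel : ∑ i ∈ Finset.range N, (dot2 (P ((i : ℤ) + 1)) (v (i : ℤ)) -
      dot2 (P (i : ℤ)) (v ((i : ℤ) - 1))) = 0 := by
    have h := Finset.sum_range_sub (fun i : ℕ => dot2 (P (i : ℤ)) (v ((i : ℤ) - 1))) N
    simp only [Nat.cast_add, Nat.cast_one, add_sub_cancel_right] at h
    rw [h]
    have e0 : P (N : ℤ) = P 0 := by simpa using hper 0
    have e1 : P ((N : ℤ) - 1) = P (-1) := by
      rw [← hper (-1), neg_add_eq_sub]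
    have ev : v ((N : ℤ) - 1) = v (-1) := by
      rw [hv, hv, sub_add_cancel, neg_add_cancel, e0, e1]
    simp [e0, ev]
  have hL' : L = ∑ i ∈ Finset.range N,
      (dot2 (P (i : ℤ)) (v ((i : ℤ) - 1)) - dot2 (P (i : ℤ)) (v (i : ℤ))) := by
    rw [hL, ← sub_eq_zero, ← Finset.sum_sub_distrib, ← htel]
    refine Finset.sum_congr rfl fun i _ => ?_
    have := hlen i
    simp only [hl] at this
    rw [this]; ring
  rw [hL', Finset.sum_congr rfl fun (i : ℕ) _ => hcos (i : ℤ), Finset.sum_sub_distrib,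
    ← Finset.mul_sum]
  simp
end

section
/- Let N ≥ 3 and let P₁, …, P_N (indices taken modulo N) be points of the billiard ellipse E such that P_{i+1} ≠ P_i and P_{i+1} ≠ P_{i−1} for all i, and such that for each i the line through P_i and P_{i+1} is tangent to the caustic E_c. Let L = Σᵢ ‖P_{i+1} − P_i‖ be the perimeter. Then the sum over the vertices of the reciprocal products of focal distances satisfies Σ_{i=1}^{N} 1/(‖P_i − F₁‖·‖P_i − F₂‖) = J·L/(2λ), where J = √λ/(ab); equivalently, the sum of the two-thirds powers of the billiard curvature at the vertices equals (ab)^{2/3}·J·L/(2λ). -/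
/-!
The proof is the reflection law together with Joachimsthal's integral. Write `A = diag(1/a², 1/b²)`
and let `wᵢ` be the unit vector from `Pᵢ` to `Pᵢ₊₁`. For a chord of `E`, tangency to the confocal
caustic `E_c` amounts to `⟨A Pᵢ, wᵢ⟩ = -J` and `⟨A Pᵢ₊₁, wᵢ⟩ = J` (`chord_joachimsthal`). Hence at
each vertex the incoming and outgoing unit vectors have opposite components along the normal
`n = A Pᵢ`, and so tangential components equal up to sign; the sign cannot be `-`, for then
`wᵢ = -wᵢ₋₁` and both sides would be the same chord, contradicting `Pᵢ₊₁ ≠ Pᵢ₋₁`. Therefore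
`wᵢ - wᵢ₋₁ = -2J n / |n|²`, and pairing with `Pᵢ` (where `⟨Pᵢ, n⟩ = 1`) gives
`⟨Pᵢ, wᵢ - wᵢ₋₁⟩ = -2J a²b² / dᵢ`, with `dᵢ = b²xᵢ²/a² + a²yᵢ²/b²` the product of the focal distances
(`vertex_reflection`). Since `|Pᵢ₊₁ - Pᵢ| = ⟨wᵢ, Pᵢ₊₁ - Pᵢ⟩`, summation by parts over a period yields
`L = 2J a²b² ∑ 1/dᵢ`, and `J² a²b² = λ`. The curvature version holds because the curvature of `E`
at `Pᵢ` is `ab / dᵢ^{3/2}`.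
-/

open Real

/-! ### Norms and focal distances -/

lemma enorm2_sq_s14 (p : ℝ × ℝ) : enorm2 p ^ 2 = p.1 ^ 2 + p.2 ^ 2 :=
  Real.sq_sqrt (by positivity)

lemma enorm2_pos_s14 {p : ℝ × ℝ} (h : p ≠ 0) : 0 < enorm2 p := by
  apply Real.sqrt_pos.2
  by_contra hn
  apply h
  have h1 : p.1 = 0 := by nlinarith [sq_nonneg p.1, sq_nonneg p.2]
  have h2 : p.2 = 0 := by nlinarith [sq_nonneg p.1, sq_nonneg p.2]
  exact Prod.ext h1 h2

/-- The product of the focal distances of a point of the ellipse, in polynomial form. -/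
lemma focal_product {a b x y : ℝ} (hab : b < a) (hb : 0 < b)
    (hE : x ^ 2 / a ^ 2 + y ^ 2 / b ^ 2 = 1) :
    enorm2 ((x, y) - (√(a ^ 2 - b ^ 2), 0)) * enorm2 ((x, y) - (-√(a ^ 2 - b ^ 2), 0)) =
      b ^ 2 * x ^ 2 / a ^ 2 + a ^ 2 * y ^ 2 / b ^ 2 := by
  have ha : 0 < a := hb.trans hab
  have hc := Real.sq_sqrt (show 0 ≤ a ^ 2 - b ^ 2 by nlinarith)
  set c := √(a ^ 2 - b ^ 2)
  have hb2 : b ^ 2 = a ^ 2 - c ^ 2 := by linarith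
  have hy : y ^ 2 = b ^ 2 * (1 - x ^ 2 / a ^ 2) := by
    field_simp at hE ⊢
    linarith
  unfold enorm2
  rw [← Real.sqrt_mul (by positivity)]
  rw [Real.sqrt_eq_iff_mul_self_eq (by positivity) (by positivity)]
  simp only [Prod.fst_sub, Prod.snd_sub, sub_zero, sub_neg_eq_add]
  have e1 : b ^ 2 * x ^ 2 / a ^ 2 + a ^ 2 * y ^ 2 / b ^ 2 = a ^ 2 - c ^ 2 * x ^ 2 / a ^ 2 := by
    rw [hy, hc]
    field_simp
    ring
  rw [e1, hy, hb2]
  field_simp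
  ring

/-! ### Tangency to the caustic -/

/-- A line with direction `(d, e) ≠ 0` meeting an ellipse (with squared semi-axes `A`, `B`) in
exactly one point satisfies the dual conic equation. -/
lemma tangent_dual {A B x y d e : ℝ} (hA : 0 < A) (hB : 0 < B) (hde : (d, e) ≠ (0 : ℝ × ℝ))
    (h : ∃ p, {q : ℝ × ℝ | ∃ t : ℝ, q = (x, y) + t • (d, e)} ∩
      {p : ℝ × ℝ | p.1 ^ 2 / A + p.2 ^ 2 / B = 1} = {p}) :
    B * d ^ 2 + A * e ^ 2 = (x * e - y * d) ^ 2 := by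
  have hpos : 0 < B * d ^ 2 + A * e ^ 2 := by
    by_contra hn
    apply hde
    have := mul_nonneg hB.le (sq_nonneg d)
    have := mul_nonneg hA.le (sq_nonneg e)
    have h1 : B * d ^ 2 = 0 := by linarith
    have h2 : A * e ^ 2 = 0 := by linarith
    have h3 : d = 0 := by simpa [hB.ne'] using h1
    have h4 : e = 0 := by simpa [hA.ne'] using h2
    simp [h3, h4]
  have key : ∀ t : ℝ, ((x, y) + t • (d, e) : ℝ × ℝ) ∈
      {p : ℝ × ℝ | p.1 ^ 2 / A + p.2 ^ 2 / B = 1} ↔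
      B * (x + t * d) ^ 2 + A * (y + t * e) ^ 2 = A * B := by
    intro t
    simp only [Set.mem_ofPred_eq, Prod.smul_mk, Prod.mk_add_mk, smul_eq_mul]
    field_simp
  obtain ⟨p, hp⟩ := h
  have hmem : p ∈ ({p} : Set (ℝ × ℝ)) := rfl
  rw [← hp] at hmem
  obtain ⟨⟨t, rfl⟩, ht⟩ := hmem
  rw [key] at ht
  -- The second root `t'` of the quadratic in `t`, read off from the sum of the roots.
  obtain ⟨t', ht'⟩ : ∃ t', (B * d ^ 2 + A * e ^ 2) * (t + t') = -2 * (B * x * d + A * y * e) :=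
    ⟨-2 * (B * x * d + A * y * e) / (B * d ^ 2 + A * e ^ 2) - t, by field_simp; ring⟩
  have ht2 : B * (x + t' * d) ^ 2 + A * (y + t' * e) ^ 2 = A * B := by
    linear_combination ht + (t' - t) * ht'
  have hmem2 : ((x, y) + t' • (d, e) : ℝ × ℝ) ∈
      ({(x, y) + t • (d, e)} : Set (ℝ × ℝ)) := by
    rw [← hp]
    exact ⟨⟨t', rfl⟩, (key t').2 ht2⟩
  have heq : t' = t := by
    have h0 : (t' - t) • (d, e) = (0 : ℝ × ℝ) := by
      have := add_left_cancel (Set.mem_singleton_iff.1 hmem2)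
      rw [sub_smul, this, sub_self]
    exact sub_eq_zero.1 ((smul_eq_zero.1 h0).resolve_right hde)
  subst heq
  have hlin : (B * d ^ 2 + A * e ^ 2) * t' = -(B * x * d + A * y * e) := by linarith
  have hAB : A * B ≠ 0 := by positivity
  -- A double root has vanishing discriminant, which is `A * B` times the claim.
  apply mul_left_cancel₀ hAB
  linear_combination (-(B * d ^ 2 + A * e ^ 2)) * ht +
    ((B * d ^ 2 + A * e ^ 2) * t' + (B * x * d + A * y * e)) * hlin

/-- Joachimsthal's integral: along a chord tangent to the caustic, the unit direction pairs with the
normals at the two end points to `-J` and `J`. The identities are multiplied by the length of the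
chord. -/
lemma chord_joachimsthal_s14 {a b lam : ℝ} (ha : 0 < a) (hb : 0 < b) (hlam0 : 0 < lam)
    (hla : lam < a ^ 2) (hlb : lam < b ^ 2) {P Q : ℝ × ℝ}
    (hP : P.1 ^ 2 / a ^ 2 + P.2 ^ 2 / b ^ 2 = 1) (hQ : Q.1 ^ 2 / a ^ 2 + Q.2 ^ 2 / b ^ 2 = 1)
    (hne : Q ≠ P)
    (h : ∃ p, {q : ℝ × ℝ | ∃ t : ℝ, q = P + t • (Q - P)} ∩
      {p : ℝ × ℝ | p.1 ^ 2 / √(a ^ 2 - lam) ^ 2 + p.2 ^ 2 / √(b ^ 2 - lam) ^ 2 = 1} = {p}) :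
    P.1 / a ^ 2 * (Q.1 - P.1) + P.2 / b ^ 2 * (Q.2 - P.2) = -(√lam / (a * b) * enorm2 (Q - P)) ∧
    Q.1 / a ^ 2 * (Q.1 - P.1) + Q.2 / b ^ 2 * (Q.2 - P.2) = √lam / (a * b) * enorm2 (Q - P) := by
  have hl := enorm2_pos_s14 (sub_ne_zero.2 hne)
  have hl2 := enorm2_sq_s14 (Q - P)
  rw [Real.sq_sqrt (by linarith), Real.sq_sqrt (by linarith)] at h
  have hdual := tangent_dual (x := P.1) (y := P.2) (d := (Q - P).1) (e := (Q - P).2)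
    (sub_pos.2 hla) (sub_pos.2 hlb) (sub_ne_zero.2 hne) h
  simp only [Prod.fst_sub, Prod.snd_sub] at hl2 hdual
  set l := enorm2 (Q - P)
  obtain ⟨x, y⟩ := P
  obtain ⟨u, v⟩ := Q
  simp only at *
  have hs := Real.sq_sqrt hlam0.le
  have hs0 := Real.sqrt_pos.2 hlam0
  set r := √lam
  have hsum : u / a ^ 2 * (u - x) + v / b ^ 2 * (v - y) =
      -(x / a ^ 2 * (u - x) + y / b ^ 2 * (v - y)) := by
    linear_combination hQ - hP
  have hS : 0 < u / a ^ 2 * (u - x) + v / b ^ 2 * (v - y) := by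
    have h2 : 2 * (u / a ^ 2 * (u - x) + v / b ^ 2 * (v - y)) =
        (u - x) ^ 2 / a ^ 2 + (v - y) ^ 2 / b ^ 2 := by linear_combination hQ - hP
    have hor : u - x ≠ 0 ∨ v - y ≠ 0 := by
      by_contra! hc
      exact hne (Prod.ext (by simpa using sub_eq_zero.1 hc.1) (by simpa using sub_eq_zero.1 hc.2))
    rcases hor with h0 | h0
    · have : 0 < (u - x) ^ 2 / a ^ 2 := by positivity
      have : 0 ≤ (v - y) ^ 2 / b ^ 2 := by positivity
      linarith
    · have : 0 ≤ (u - x) ^ 2 / a ^ 2 := by positivity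
      have : 0 < (v - y) ^ 2 / b ^ 2 := by positivity
      linarith
  set S := u / a ^ 2 * (u - x) + v / b ^ 2 * (v - y) with hSdef
  have hT : x / a ^ 2 * (u - x) + y / b ^ 2 * (v - y) = -S := by linarith
  have hsq : (a * b * S) ^ 2 = (r * l) ^ 2 := by
    have e1 : a * b * S = -(b / a * (x * (u - x)) + a / b * (y * (v - y))) := by
      rw [← neg_eq_iff_eq_neg.2 hT]
      field_simp
    -- Lagrange's identity for the form of `E`, evaluated at `P ∈ E`.
    have e2 : (a * b * S) ^ 2 =
        (x ^ 2 / a ^ 2 + y ^ 2 / b ^ 2) * (b ^ 2 * (u - x) ^ 2 + a ^ 2 * (v - y) ^ 2) -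
          (x * (v - y) - y * (u - x)) ^ 2 := by
      rw [e1]
      field_simp
      ring
    rw [e2, hP, mul_pow, hs, hl2]
    linear_combination hdual
  have hab : a * b * S = r * l := by
    exact (pow_left_inj₀ (by positivity) (by positivity) two_ne_zero).1 hsq
  have hS' : S = r / (a * b) * l := by
    field_simp
    linarith
  exact ⟨by rw [hT, hS'], hS'⟩

/-! ### Reflection at a vertex -/

lemma normal_sq_ne_zero {n m x y : ℝ} (hp : x * n + y * m = 1) : n ^ 2 + m ^ 2 ≠ 0 := by
  intro h0
  have h1 : n = 0 := by nlinarith [sq_nonneg n, sq_nonneg m]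
  have h2 : m = 0 := by nlinarith [sq_nonneg n, sq_nonneg m]
  simp [h1, h2] at hp

/-- Two unit vectors `w`, `z` that have opposite components along the vector `(n, m)` and are not
antipodal are mirror images: `w - z = -2J (n, m) / |(n, m)|²`. The conclusion is this identity paired
with a vector `(x, y)` whose inner product with `(n, m)` is `1`. -/
lemma reflection_pairing {n m w₁ w₂ z₁ z₂ x y J : ℝ}
    (hw : w₁ ^ 2 + w₂ ^ 2 = 1) (hz : z₁ ^ 2 + z₂ ^ 2 = 1)
    (hnw : n * w₁ + m * w₂ = -J) (hnz : n * z₁ + m * z₂ = J)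
    (hp : x * n + y * m = 1) (hne : ¬ (w₁ = -z₁ ∧ w₂ = -z₂)) :
    (n ^ 2 + m ^ 2) * (x * (w₁ - z₁) + y * (w₂ - z₂)) = -2 * J := by
  have hsq : (-m * w₁ + n * w₂) ^ 2 = (-m * z₁ + n * z₂) ^ 2 := by
    linear_combination (n ^ 2 + m ^ 2) * hw - (n ^ 2 + m ^ 2) * hz -
      (n * w₁ + m * w₂ - J) * hnw + (n * z₁ + m * z₂ + J) * hnz
  have hn := normal_sq_ne_zero hp
  rcases sq_eq_sq_iff_eq_or_eq_neg.1 hsq with h | h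
  · linear_combination (x * n + y * m) * (hnw - hnz) + (-x * m + y * n) * h - 2 * J * hp
  · refine absurd ⟨?_, ?_⟩ hne
    · apply mul_left_cancel₀ hn
      linear_combination n * (hnw + hnz) - m * h
    · apply mul_left_cancel₀ hn
      linear_combination m * (hnw + hnz) + n * h

/-- The reflection law at the vertex `P` of consecutive sides `QP` and `PR` tangent to the caustic,
paired with `P`: here `z` and `w` are the incoming and outgoing unit vectors. -/
lemma vertex_reflection {a b J l k : ℝ} (ha : 0 < a) (hb : 0 < b)
    {P Q R : ℝ × ℝ} (hl : 0 < l) (hk : 0 < k)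
    (hP : P.1 ^ 2 / a ^ 2 + P.2 ^ 2 / b ^ 2 = 1)
    (hQ : Q.1 ^ 2 / a ^ 2 + Q.2 ^ 2 / b ^ 2 = 1)
    (hR : R.1 ^ 2 / a ^ 2 + R.2 ^ 2 / b ^ 2 = 1)
    (hRQ : R ≠ Q)
    (hl2 : l ^ 2 = (R.1 - P.1) ^ 2 + (R.2 - P.2) ^ 2)
    (hk2 : k ^ 2 = (P.1 - Q.1) ^ 2 + (P.2 - Q.2) ^ 2)
    (hw : P.1 / a ^ 2 * (R.1 - P.1) + P.2 / b ^ 2 * (R.2 - P.2) = -(J * l))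
    (hz : P.1 / a ^ 2 * (P.1 - Q.1) + P.2 / b ^ 2 * (P.2 - Q.2) = J * k) :
    P.1 * ((R.1 - P.1) / l - (P.1 - Q.1) / k) + P.2 * ((R.2 - P.2) / l - (P.2 - Q.2) / k) =
      -(2 * J * (a * b) ^ 2) * (b ^ 2 * P.1 ^ 2 / a ^ 2 + a ^ 2 * P.2 ^ 2 / b ^ 2)⁻¹ := by
  obtain ⟨x, y⟩ := P
  obtain ⟨u, v⟩ := Q
  obtain ⟨s, t⟩ := R
  simp only at *
  obtain ⟨w₁, hw₁⟩ : ∃ w₁, w₁ = (s - x) / l := ⟨_, rfl⟩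
  obtain ⟨w₂, hw₂⟩ : ∃ w₂, w₂ = (t - y) / l := ⟨_, rfl⟩
  obtain ⟨z₁, hz₁⟩ : ∃ z₁, z₁ = (x - u) / k := ⟨_, rfl⟩
  obtain ⟨z₂, hz₂⟩ : ∃ z₂, z₂ = (y - v) / k := ⟨_, rfl⟩
  rw [← hw₁, ← hw₂, ← hz₁, ← hz₂]
  have hs : s = x + l * w₁ := by rw [hw₁]; field_simp; ring
  have ht : t = y + l * w₂ := by rw [hw₂]; field_simp; ring
  have hu : u = x - k * z₁ := by rw [hz₁]; field_simp; ring
  have hv : v = y - k * z₂ := by rw [hz₂]; field_simp; ring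
  clear hw₁ hw₂ hz₁ hz₂
  subst hs ht hu hv
  have hwu : w₁ ^ 2 + w₂ ^ 2 = 1 := by
    apply mul_left_cancel₀ (pow_ne_zero 2 hl.ne')
    linear_combination -hl2
  have hzu : z₁ ^ 2 + z₂ ^ 2 = 1 := by
    apply mul_left_cancel₀ (pow_ne_zero 2 hk.ne')
    linear_combination -hk2
  have hnw : x / a ^ 2 * w₁ + y / b ^ 2 * w₂ = -J := by
    apply mul_left_cancel₀ hl.ne'
    linear_combination hw
  have hnz : x / a ^ 2 * z₁ + y / b ^ 2 * z₂ = J := by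
    apply mul_left_cancel₀ hk.ne'
    linear_combination hz
  have hp : x * (x / a ^ 2) + y * (y / b ^ 2) = 1 := by linear_combination hP
  have hne : ¬ (w₁ = -z₁ ∧ w₂ = -z₂) := by
    rintro ⟨rfl, rfl⟩
    -- Both sides lie on one ray from `P`, which meets the ellipse in only one further point.
    have q1 : l * (z₁ ^ 2 / a ^ 2 + z₂ ^ 2 / b ^ 2) = 2 * J := by
      apply mul_left_cancel₀ hl.ne'
      linear_combination hR - hP - 2 * l * hnw
    have q2 : k * (z₁ ^ 2 / a ^ 2 + z₂ ^ 2 / b ^ 2) = 2 * J := by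
      apply mul_left_cancel₀ hk.ne'
      linear_combination hQ - hP + 2 * k * hnz
    have q0 : z₁ ^ 2 / a ^ 2 + z₂ ^ 2 / b ^ 2 ≠ 0 := by
      intro h0
      have g1 : 0 ≤ z₁ ^ 2 / a ^ 2 := by positivity
      have g2 : 0 ≤ z₂ ^ 2 / b ^ 2 := by positivity
      have g3 : z₁ ^ 2 / a ^ 2 = 0 := by linarith
      have g4 : z₂ ^ 2 / b ^ 2 = 0 := by linarith
      have g5 : z₁ = 0 := by simpa [ha.ne'] using g3
      have g6 : z₂ = 0 := by simpa [hb.ne'] using g4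
      simp [g5, g6] at hzu
    have hlk : l = k := mul_right_cancel₀ q0 (q1.trans q2.symm)
    apply hRQ
    rw [hlk]
    ext <;> simp only <;> ring
  have hmain := reflection_pairing hwu hzu hnw hnz hp hne
  have hd : b ^ 2 * x ^ 2 / a ^ 2 + a ^ 2 * y ^ 2 / b ^ 2 =
      (a * b) ^ 2 * ((x / a ^ 2) ^ 2 + (y / b ^ 2) ^ 2) := by
    field_simp
  have hn0 := normal_sq_ne_zero hp
  rw [hd, mul_inv]
  have hab0 : (a * b) ^ 2 ≠ 0 := by positivity
  apply mul_left_cancel₀ hn0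
  rw [hmain]
  generalize (x / a ^ 2) ^ 2 + (y / b ^ 2) ^ 2 = D at *
  field_simp

/-! ### Curvature of the ellipse -/

/-- The curvature of the ellipse is `ab / d^{3/2}` with `d` the product of the focal distances. -/
lemma curv_rpow {a b : ℝ} (ha : 0 < a) (hb : 0 < b) (t : ℝ) :
    curv (fun s => a * Real.cos s) (fun s => b * Real.sin s) t ^ ((2 : ℝ) / 3) =
      (a * b) ^ ((2 : ℝ) / 3) *
        (b ^ 2 * (a * Real.cos t) ^ 2 / a ^ 2 + a ^ 2 * (b * Real.sin t) ^ 2 / b ^ 2)⁻¹ := by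
  have d1 : deriv (fun s => a * Real.cos s) = fun s => -(a * Real.sin s) := by
    funext s
    simp
  have d2 : deriv (fun s => b * Real.sin s) = fun s => b * Real.cos s := by
    funext s
    exact ((Real.hasDerivAt_sin s).const_mul b).deriv
  have d3 : deriv (fun s => -(a * Real.sin s)) t = -(a * Real.cos t) :=
    ((Real.hasDerivAt_sin t).const_mul a).neg.deriv
  have d4 : deriv (fun s => b * Real.cos s) t = -(b * Real.sin t) := by
    simp
  have e : b ^ 2 * (a * Real.cos t) ^ 2 / a ^ 2 + a ^ 2 * (b * Real.sin t) ^ 2 / b ^ 2 =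
      (-(a * Real.sin t)) ^ 2 + (b * Real.cos t) ^ 2 := by
    field_simp
    ring
  have hnum : -(a * Real.sin t) * -(b * Real.sin t) - b * Real.cos t * -(a * Real.cos t) =
      a * b := by
    linear_combination a * b * Real.sin_sq_add_cos_sq t
  unfold curv
  rw [d1, d2]
  simp only
  rw [d3, d4, hnum, e]
  have h0 : 0 ≤ (-(a * Real.sin t)) ^ 2 + (b * Real.cos t) ^ 2 := by positivity
  rw [Real.div_rpow (by positivity) (by positivity), ← Real.rpow_mul h0]
  norm_num [div_eq_mul_inv]

/-! ### Summation over the vertices -/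

/-- For an `N`-periodic billiard polygon (`N ≥ 3`) inscribed in `E`
with all sides tangent to the caustic `E_c` and perimeter `L`, the sum over the
vertices of the reciprocal products of focal distances satisfies
`Σ 1/(‖P_i − F₁‖·‖P_i − F₂‖) = J·L/(2λ)`; equivalently, the sum of the two-thirds
powers of the billiard curvature at the vertices equals `(ab)^{2/3}·J·L/(2λ)`. -/
theorem stmt14 (a b lam : ℝ) (hab : b < a) (hb : 0 < b)
    (hlam0 : 0 < lam) (hlamb : lam < b ^ 2)
    (c ac bc : ℝ) (hc : c = Real.sqrt (a ^ 2 - b ^ 2))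
    (hac : ac = Real.sqrt (a ^ 2 - lam)) (hbc : bc = Real.sqrt (b ^ 2 - lam))
    (E Ec : Set (ℝ × ℝ))
    (hE : E = {p : ℝ × ℝ | p.1 ^ 2 / a ^ 2 + p.2 ^ 2 / b ^ 2 = 1})
    (hEc : Ec = {p : ℝ × ℝ | p.1 ^ 2 / ac ^ 2 + p.2 ^ 2 / bc ^ 2 = 1})
    (F1 F2 : ℝ × ℝ) (hF1 : F1 = (c, 0)) (hF2 : F2 = (-c, 0))
    (J : ℝ) (hJ : J = Real.sqrt lam / (a * b))
    (N : ℕ) (hN : 3 ≤ N)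
    (P : ℤ → ℝ × ℝ) (hper : ∀ i : ℤ, P (i + N) = P i)
    (hPE : ∀ i : ℤ, P i ∈ E)
    (hne1 : ∀ i : ℤ, P (i + 1) ≠ P i)
    (hne2 : ∀ i : ℤ, P (i + 1) ≠ P (i - 1))
    (htan : ∀ i : ℤ, ∃ p,
      {q : ℝ × ℝ | ∃ t : ℝ, q = P i + t • (P (i + 1) - P i)} ∩ Ec = {p})
    (L : ℝ) (hL : L = ∑ i ∈ Finset.range N, enorm2 (P ((i : ℤ) + 1) - P (i : ℤ))) :
    (∑ i ∈ Finset.range N, (enorm2 (P (i : ℤ) - F1) * enorm2 (P (i : ℤ) - F2))⁻¹ =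
        J * L / (2 * lam)) ∧
      ∀ t : ℤ → ℝ, (∀ i : ℤ, ((a * Real.cos (t i), b * Real.sin (t i)) : ℝ × ℝ) = P i) →
        ∑ i ∈ Finset.range N,
            curv (fun s => a * Real.cos s) (fun s => b * Real.sin s) (t (i : ℤ)) ^ ((2 : ℝ) / 3) =
          (a * b) ^ ((2 : ℝ) / 3) * J * L / (2 * lam) := by
  have ha : 0 < a := hb.trans hab
  have hla : lam < a ^ 2 := by nlinarith
  subst hE hEc hac hbc hF1 hF2 hc
  have hJ0 : 0 < J := by
    rw [hJ]
    have := Real.sqrt_pos.2 hlam0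
    positivity
  have hJ2 : J ^ 2 * (a * b) ^ 2 = lam := by
    rw [hJ, div_pow, Real.sq_sqrt hlam0.le]
    field_simp
  obtain ⟨d, hd⟩ : ∃ d : ℤ → ℝ, ∀ i, d i =
      b ^ 2 * (P i).1 ^ 2 / a ^ 2 + a ^ 2 * (P i).2 ^ 2 / b ^ 2 := ⟨_, fun _ => rfl⟩
  obtain ⟨l, hl⟩ : ∃ l : ℤ → ℝ, ∀ i, l i = enorm2 (P (i + 1) - P i) := ⟨_, fun _ => rfl⟩
  have hlpos : ∀ i, 0 < l i := fun i => by
    rw [hl]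
    exact enorm2_pos_s14 (sub_ne_zero.2 (hne1 i))
  have hl2 : ∀ i, l i ^ 2 = ((P (i + 1)).1 - (P i).1) ^ 2 + ((P (i + 1)).2 - (P i).2) ^ 2 :=
    fun i => by rw [hl, enorm2_sq_s14]; rfl
  have hch := fun i => chord_joachimsthal_s14 ha hb hlam0 hla hlamb (hPE i) (hPE (i + 1)) (hne1 i)
    (htan i)
  simp only [← hJ, ← hl] at hch
  -- The boundary term of the summation by parts: `⟨wᵢ₋₁, Pᵢ⟩`.
  obtain ⟨g, hg⟩ : ∃ g : ℤ → ℝ, ∀ i, g i =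
      (P i).1 * (((P i).1 - (P (i - 1)).1) / l (i - 1)) +
      (P i).2 * (((P i).2 - (P (i - 1)).2) / l (i - 1)) := ⟨_, fun _ => rfl⟩
  have hstep : ∀ i, l i = (g (i + 1) - g i) + 2 * J * (a * b) ^ 2 * (d i)⁻¹ := by
    intro i
    have h1 := hl2 (i - 1)
    have h2 := (hch (i - 1)).2
    rw [sub_add_cancel] at h1 h2
    have hv := vertex_reflection ha hb (hlpos i) (hlpos (i - 1)) (hPE i) (hPE (i - 1))
      (hPE (i + 1)) (hne2 i) (hl2 i) h1 (hch i).1 h2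
    have h3 : l i = ((P (i + 1)).1 - (P i).1) * (((P (i + 1)).1 - (P i).1) / l i) +
        ((P (i + 1)).2 - (P i).2) * (((P (i + 1)).2 - (P i).2) / l i) := by
      have := (hlpos i).ne'
      field_simp
      linear_combination hl2 i
    rw [← hd] at hv
    rw [hg, hg, add_sub_cancel_right]
    linear_combination h3 - hv
  have hgper : g N = g 0 := by
    have h0 : P (N : ℤ) = P 0 := by simpa using hper 0
    have h1 : P ((N : ℤ) - 1) = P (0 - 1) := by
      rw [← hper (0 - 1)]
      ring_nf
    have h2 : l ((N : ℤ) - 1) = l (0 - 1) := by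
      rw [hl, hl, h1, sub_add_cancel, sub_add_cancel, h0]
    rw [hg, hg, h0, h1, h2]
  have hsum : L = 2 * J * (a * b) ^ 2 * ∑ i ∈ Finset.range N, (d (i : ℤ))⁻¹ := by
    have htel := Finset.sum_range_sub (fun i : ℕ => g (i : ℤ)) N
    simp only [Nat.cast_add, Nat.cast_one, Nat.cast_zero, hgper, sub_self] at htel
    rw [hL, Finset.mul_sum]
    simp only [← hl]
    rw [Finset.sum_congr rfl fun (i : ℕ) _ => hstep i, Finset.sum_add_distrib, htel, zero_add]
  have hfin : ∑ i ∈ Finset.range N, (d (i : ℤ))⁻¹ = J * L / (2 * lam) := by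
    rw [hsum, ← hJ2]
    field_simp
  refine ⟨?_, fun t ht => ?_⟩
  · rw [← hfin]
    refine Finset.sum_congr rfl fun i _ => ?_
    rw [hd, ← focal_product hab hb (hPE i)]
  · have hc : ∀ i : ℤ, curv (fun s => a * Real.cos s) (fun s => b * Real.sin s) (t i) ^
        ((2 : ℝ) / 3) = (a * b) ^ ((2 : ℝ) / 3) * (d i)⁻¹ := by
      intro i
      rw [curv_rpow ha hb, hd, ← ht i]
    rw [Finset.sum_congr rfl fun (i : ℕ) _ => hc i, ← Finset.mul_sum, hfin]
    ring
end

section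
/- Let P = (x, y) be a point of the billiard ellipse E and let ℓ₁ ≠ ℓ₂ be two lines through P, each tangent to the caustic E_c. Then ℓ₂ is the reflection of ℓ₁ in the normal line of E at P: if u is a unit direction vector of ℓ₁ and n = A·P = (x/a², y/b²) is the normal vector of E at P, then the reflected vector u − 2(⟨u, n⟩/⟨n, n⟩)·n is a direction vector of ℓ₂. -/
/-!
The tangency of a line `P + ℝ v` to the caustic is a vanishing discriminant. For `P ∈ E` and
`n = A P` this condition collapses to Joachimsthal's relation `a² b² ⟨v, n⟩² = λ ⟨v, v⟩`
(`tangent_cond` and `joachimsthal`). Hence the two tangent directions `u`, `w` make the same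
angle with the normal up to sign, so `w` is parallel either to `u`, which `ℓ₁ ≠ ℓ₂` excludes,
or to the reflection of `u` (`parallel_or_reflected`).
-/

open Real

/-- Lines through a common point with parallel nonzero directions coincide. -/
lemma line_eq_of_parallel (P u w : ℝ × ℝ) (hu : 0 < dot2 u u) (hw : 0 < dot2 w w)
    (h : u.1 * w.2 = u.2 * w.1) :
    {q : ℝ × ℝ | ∃ s : ℝ, q = P + s • u} = {q : ℝ × ℝ | ∃ s : ℝ, q = P + s • w} := by
  have key : ∀ u w : ℝ × ℝ, 0 < dot2 w w → u.1 * w.2 = u.2 * w.1 →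
      ∃ c : ℝ, u = c • w := by
    intro u w hw h
    refine ⟨dot2 u w / dot2 w w, Prod.ext ?_ ?_⟩
    · simp only [Prod.smul_fst, smul_eq_mul]
      rw [div_mul_eq_mul_div, eq_div_iff hw.ne']
      simp only [dot2]
      linear_combination w.2 * h
    · simp only [Prod.smul_snd, smul_eq_mul]
      rw [div_mul_eq_mul_div, eq_div_iff hw.ne']
      simp only [dot2]
      linear_combination -w.1 * h
  obtain ⟨c, hc⟩ := key u w hw h
  obtain ⟨d, hd⟩ := key w u hu (by linear_combination -h)
  ext q
  constructor
  · rintro ⟨s, rfl⟩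
    exact ⟨s * c, by rw [mul_smul, ← hc]⟩
  · rintro ⟨s, rfl⟩
    exact ⟨s * d, by rw [mul_smul, ← hd]⟩

/-- If a line meets the ellipse `X²/α + Y²/β = 1` exactly once, the discriminant of the
quadratic for the intersection parameter vanishes: otherwise, reflecting one root in the vertex
of the parabola would produce a second intersection point. -/
lemma tangent_cond (α β : ℝ) (hα : 0 < α) (hβ : 0 < β) (P v : ℝ × ℝ) (hv : 0 < dot2 v v)
    (h : ∃ p, {q : ℝ × ℝ | ∃ s : ℝ, q = P + s • v} ∩
      {p : ℝ × ℝ | p.1 ^ 2 / α + p.2 ^ 2 / β = 1} = {p}) :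
    (P.1 * v.2 - P.2 * v.1) ^ 2 = β * v.1 ^ 2 + α * v.2 ^ 2 := by
  obtain ⟨p, hp⟩ := h
  obtain ⟨x, y⟩ := P
  obtain ⟨c, d⟩ := v
  simp only [dot2] at hv ⊢
  have mem : ∀ s : ℝ, β * (x + s * c) ^ 2 + α * (y + s * d) ^ 2 = α * β →
      (x, y) + s • (c, d) = p := by
    intro s hs
    have : (x, y) + s • (c, d) ∈ ({p} : Set (ℝ × ℝ)) := by
      rw [← hp]
      refine ⟨⟨s, rfl⟩, ?_⟩
      simp only [Set.mem_ofPred_eq, Prod.fst_add, Prod.snd_add, Prod.smul_fst, Prod.smul_snd,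
        smul_eq_mul]
      field_simp
      linear_combination hs
    exact this
  have hpm : p ∈ ({p} : Set (ℝ × ℝ)) := rfl
  rw [← hp] at hpm
  obtain ⟨⟨s, rfl⟩, hs⟩ := hpm
  simp only [Set.mem_ofPred_eq, Prod.fst_add, Prod.snd_add, Prod.smul_fst, Prod.smul_snd,
    smul_eq_mul] at hs
  field_simp at hs
  have hA : 0 < β * c ^ 2 + α * d ^ 2 := by
    rcases eq_or_ne c 0 with rfl | hc
    · have : d ≠ 0 := by rintro rfl; simp at hv
      positivity
    · positivity
  -- The sum of the two roots of the quadratic is `-2 B / A`.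
  obtain ⟨t, ht⟩ : ∃ t : ℝ, (β * c ^ 2 + α * d ^ 2) * (t + s) =
      -2 * (β * x * c + α * y * d) :=
    ⟨-2 * (β * x * c + α * y * d) / (β * c ^ 2 + α * d ^ 2) - s, by field_simp; ring⟩
  have h2 := mem t (by linear_combination hs + (t - s) * ht)
  simp only [Prod.ext_iff, Prod.fst_add, Prod.snd_add, Prod.smul_fst, Prod.smul_snd,
    smul_eq_mul] at h2
  have hts : t = s := by
    have : (t - s) * (c * c + d * d) = 0 := by linear_combination c * h2.1 + d * h2.2
    rcases mul_eq_zero.mp this with h | h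
    · linarith
    · exact absurd h hv.ne'
  subst hts
  have hB : (β * c ^ 2 + α * d ^ 2) * t = -(β * x * c + α * y * d) := by linarith
  have : α * β * ((x * d - y * c) ^ 2 - (β * c ^ 2 + α * d ^ 2)) = 0 := by
    linear_combination (β * c ^ 2 + α * d ^ 2) * hs -
      ((β * c ^ 2 + α * d ^ 2) * t + (β * x * c + α * y * d)) * hB
  rcases mul_eq_zero.mp this with h | h
  · exact absurd h (by positivity)
  · linarith

/-- At a point `P ∈ E`, the tangency condition for the caustic is
`a² b² ⟨v, A P⟩² = λ ⟨v, v⟩`. -/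
lemma joachimsthal (a b lam : ℝ) (ha : 0 < a) (hb : 0 < b) (P v : ℝ × ℝ)
    (hP : P.1 ^ 2 / a ^ 2 + P.2 ^ 2 / b ^ 2 = 1)
    (h : (P.1 * v.2 - P.2 * v.1) ^ 2 = (b ^ 2 - lam) * v.1 ^ 2 + (a ^ 2 - lam) * v.2 ^ 2) :
    a ^ 2 * b ^ 2 * dot2 v (P.1 / a ^ 2, P.2 / b ^ 2) ^ 2 = lam * dot2 v v := by
  obtain ⟨x, y⟩ := P
  obtain ⟨c, d⟩ := v
  simp only [dot2] at *
  have hx : x ^ 2 = a ^ 2 * (1 - y ^ 2 / b ^ 2) := by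
    rw [← hP]; field_simp; ring
  have hy : y ^ 2 = b ^ 2 * (1 - x ^ 2 / a ^ 2) := by
    rw [← hP]; field_simp; ring
  have e : a ^ 2 * b ^ 2 * (c * (x / a ^ 2) + d * (y / b ^ 2)) ^ 2 =
      c ^ 2 * (b ^ 2 * (x ^ 2 / a ^ 2)) + 2 * c * d * x * y +
        d ^ 2 * (a ^ 2 * (y ^ 2 / b ^ 2)) := by
    field_simp; ring
  rw [e]
  linear_combination -h + d ^ 2 * hx + c ^ 2 * hy

/-- Two directions making the same angle with `n`, up to sign, are parallel or one is parallel
to the reflection of the other. -/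
lemma parallel_or_reflected (k : ℝ) (u w n : ℝ × ℝ) (hn : 0 < dot2 n n)
    (hu : dot2 u n ^ 2 = k * dot2 u u) (hw : dot2 w n ^ 2 = k * dot2 w w) :
    u.1 * w.2 = u.2 * w.1 ∨
      w.1 * (u - (2 * (dot2 u n / dot2 n n)) • n).2 =
        w.2 * (u - (2 * (dot2 u n / dot2 n n)) • n).1 := by
  -- The Lagrange identity, for the component orthogonal to `n`.
  have lag : ∀ v : ℝ × ℝ, (v.1 * n.2 - v.2 * n.1) ^ 2 =
      dot2 v v * dot2 n n - dot2 v n ^ 2 := by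
    intro v; simp only [dot2]; ring
  have hn' := hn.ne'
  have hsq : (dot2 w n * (u.1 * n.2 - u.2 * n.1)) ^ 2 =
      ((w.1 * n.2 - w.2 * n.1) * dot2 u n) ^ 2 := by
    rw [mul_pow, mul_pow, lag, lag, hu, hw]; ring
  rcases sq_eq_sq_iff_eq_or_eq_neg.mp hsq with h | h
  · left
    have : dot2 n n * (u.1 * w.2 - u.2 * w.1) = 0 := by
      simp only [dot2] at *
      linear_combination h
    rcases mul_eq_zero.mp this with h | h
    · exact absurd h hn'
    · linarith
  · right
    simp only [Prod.fst_sub, Prod.snd_sub, Prod.smul_fst, Prod.smul_snd, smul_eq_mul]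
    field_simp
    simp only [dot2] at *
    linear_combination -h

/-- Let `P = (x,y) ∈ E` and let `ℓ₁ ≠ ℓ₂` be two lines through `P`,
each tangent to the caustic `E_c`.  Then `ℓ₂` is the reflection of `ℓ₁` in the
normal line of `E` at `P`: if `u` is a unit direction vector of `ℓ₁` and
`n = A·P = (x/a², y/b²)`, then `u − 2(⟨u,n⟩/⟨n,n⟩)·n` is a direction vector of `ℓ₂`. -/
theorem stmt15 (a b lam : ℝ) (hab : b < a) (hb : 0 < b)
    (hlam0 : 0 < lam) (hlamb : lam < b ^ 2)
    (ac bc : ℝ) (hac : ac = Real.sqrt (a ^ 2 - lam)) (hbc : bc = Real.sqrt (b ^ 2 - lam))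
    (E Ec : Set (ℝ × ℝ))
    (hE : E = {p : ℝ × ℝ | p.1 ^ 2 / a ^ 2 + p.2 ^ 2 / b ^ 2 = 1})
    (hEc : Ec = {p : ℝ × ℝ | p.1 ^ 2 / ac ^ 2 + p.2 ^ 2 / bc ^ 2 = 1})
    (A : ℝ × ℝ → ℝ × ℝ) (hA : A = fun p : ℝ × ℝ => (p.1 / a ^ 2, p.2 / b ^ 2))
    (P : ℝ × ℝ) (hP : P ∈ E)
    (u : ℝ × ℝ) (hu : dot2 u u = 1)
    (l1 l2 : Set (ℝ × ℝ))
    (hl1 : l1 = {q : ℝ × ℝ | ∃ s : ℝ, q = P + s • u})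
    (w : ℝ × ℝ) (hwne : w ≠ 0)
    (hl2 : l2 = {q : ℝ × ℝ | ∃ s : ℝ, q = P + s • w})
    (hne : l1 ≠ l2)
    (htan1 : ∃ p, l1 ∩ Ec = {p}) (htan2 : ∃ p, l2 ∩ Ec = {p})
    (n : ℝ × ℝ) (hn : n = A P) :
    l2 = {q : ℝ × ℝ | ∃ s : ℝ, q = P + s • (u - (2 * (dot2 u n / dot2 n n)) • n)} := by
  have ha : 0 < a := hb.trans hab
  have hα : 0 < a ^ 2 - lam := by nlinarith
  have hβ : 0 < b ^ 2 - lam := by linarith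
  have hac2 : ac ^ 2 = a ^ 2 - lam := by rw [hac, Real.sq_sqrt hα.le]
  have hbc2 : bc ^ 2 = b ^ 2 - lam := by rw [hbc, Real.sq_sqrt hβ.le]
  rw [hac2, hbc2] at hEc
  have hu0 : 0 < dot2 u u := by rw [hu]; exact one_pos
  have dot_pos : ∀ v : ℝ × ℝ, v ≠ 0 → 0 < dot2 v v := by
    intro v hv
    by_contra! h
    simp only [dot2] at h
    have h1 := mul_self_nonneg v.1
    have h2 := mul_self_nonneg v.2
    exact hv (Prod.ext (mul_self_eq_zero.mp (by linarith)) (mul_self_eq_zero.mp (by linarith)))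
  have hw0 := dot_pos w hwne
  rw [hE] at hP
  simp only [Set.mem_ofPred_eq] at hP
  have hn' : n = (P.1 / a ^ 2, P.2 / b ^ 2) := by rw [hn, hA]
  have J1 := joachimsthal a b lam ha hb P u hP
    (tangent_cond _ _ hα hβ P u hu0 (by rw [← hl1, ← hEc]; exact htan1))
  have J2 := joachimsthal a b lam ha hb P w hP
    (tangent_cond _ _ hα hβ P w hw0 (by rw [← hl2, ← hEc]; exact htan2))
  rw [← hn'] at J1 J2
  have hn0 : 0 < dot2 n n := by
    apply dot_pos
    rintro h0
    have : dot2 u n = 0 := by simp [h0, dot2]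
    rw [this, hu] at J1
    nlinarith
  have hk : ∀ v : ℝ × ℝ, a ^ 2 * b ^ 2 * dot2 v n ^ 2 = lam * dot2 v v →
      dot2 v n ^ 2 = lam / (a ^ 2 * b ^ 2) * dot2 v v := by
    intro v hv
    rw [div_mul_eq_mul_div, eq_div_iff (by positivity)]
    linarith
  rcases parallel_or_reflected _ u w n hn0 (hk u J1) (hk w J2) with h | h
  · exact absurd (by rw [hl1, hl2]; exact line_eq_of_parallel P u w hu0 hw0 h) hne
  · rw [hl2]
    refine line_eq_of_parallel P w _ hw0 ?_ h
    -- Reflection preserves length.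
    have : dot2 (u - (2 * (dot2 u n / dot2 n n)) • n) (u - (2 * (dot2 u n / dot2 n n)) • n) =
        dot2 u u := by
      have e : dot2 u n / dot2 n n * dot2 n n = dot2 u n := div_mul_cancel₀ _ hn0.ne'
      generalize dot2 u n / dot2 n n = t at e ⊢
      simp only [dot2, Prod.fst_sub, Prod.snd_sub, Prod.smul_fst, Prod.smul_snd,
        smul_eq_mul] at e ⊢
      linear_combination 4 * t * e
    rw [this]
    exact hu0
end
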